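/- arXiv:2412.15463 — 3 statements merged into one kernel-verified Lean document; each statement's English description precedes it below -/
import Mathlib

section
/- Let d ≥ 3, Ω = {1,…,d}, and let F ≤ F' ≤ Sym(Ω) be permutation groups such that every element of F' maps each F-orbit onto itself and F' acts 2-transitively on Ω. Let T be a legally colored d-regular tree. Then G(F,F') acts transitively on ordered geodesic segments of every fixed length: for all vertices x, y, x', y' of T with d(x,y) = d(x',y'), there exists g ∈ G(F,F') with g·x = x' and g·y = y'. Moreover, for every geodesic line L in T and all vertices x, y of T there exists g ∈ G(F,F') such that g·[x,y] ⊆ L(ℤ) and d(x, g·x) is even. -/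
/-- The automorphism group of a simple graph, as a subgroup of the permutation
group of its vertex set. -/
def SimpleGraph.autSubgroup {V : Type*} (T : SimpleGraph V) : Subgroup (Equiv.Perm V) where
  carrier := {e | ∀ u v : V, T.Adj (e u) (e v) ↔ T.Adj u v}
  one_mem' := fun _ _ => Iff.rfl
  mul_mem' := by
    intro a b ha hb u v
    simp only [Equiv.Perm.mul_apply]
    rw [ha, hb]
  inv_mem' := by
    intro a ha u v
    simpa using (ha (a⁻¹ u) (a⁻¹ v)).symm

/-- A legal coloring of a `d`-regular tree: every vertex's edges are colored
bijectively with the colors `Fin d`. The color of the edge `{u, v}` is `color u v`. -/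
structure LegalColoring {V : Type*} (T : SimpleGraph V) (d : ℕ) where
  color : V → V → Fin d
  symm : ∀ ⦃u v : V⦄, T.Adj u v → color u v = color v u
  bij : ∀ (v : V) (i : Fin d), ∃! w : V, T.Adj v w ∧ color v w = i

/-- The local permutation `σ(g, v)` of an automorphism `g` at a vertex `v`
belongs to the permutation group `F`. -/
def LocalIn {V : Type*} {d : ℕ} (T : SimpleGraph V) (C : LegalColoring T d)
    (F : Subgroup (Equiv.Perm (Fin d))) (g : Equiv.Perm V) (v : V) : Prop :=
  ∃ π ∈ F, ∀ ⦃w : V⦄, T.Adj v w → C.color (g v) (g w) = π (C.color v w)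

/-- The universal Burger–Mozes group `U(F)` (as a set of permutations of the vertices):
automorphisms whose local permutation lies in `F` at every vertex. -/
def USet {V : Type*} {d : ℕ} (T : SimpleGraph V) (C : LegalColoring T d)
    (F : Subgroup (Equiv.Perm (Fin d))) : Set (Equiv.Perm V) :=
  {g | g ∈ T.autSubgroup ∧ ∀ v : V, LocalIn T C F g v}

/-- The group `G(F)`: automorphisms whose local permutation lies in `F` at all but
finitely many vertices. -/
def GSet {V : Type*} {d : ℕ} (T : SimpleGraph V) (C : LegalColoring T d)
    (F : Subgroup (Equiv.Perm (Fin d))) : Set (Equiv.Perm V) :=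
  {g | g ∈ T.autSubgroup ∧ {v : V | ¬ LocalIn T C F g v}.Finite}

/-- Le Boudec's group `G(F, F')` with almost prescribed local action (as a set of
permutations of the vertices): `G(F) ∩ U(F')`. -/
def GFFSet {V : Type*} {d : ℕ} (T : SimpleGraph V) (C : LegalColoring T d)
    (F F' : Subgroup (Equiv.Perm (Fin d))) : Set (Equiv.Perm V) :=
  GSet T C F ∩ USet T C F'

/-!
A compatible choice of local permutations, made outwards from a root, integrates to an automorphism
of the tree: the choice determines a locally bijective endomorphism, and a locally injective
homomorphism into a tree preserves distances because it maps geodesics to non-backtracking walks.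

To move the segment `a 0, …, a n` to `q 0, …, q n`, root the tree at `a 0` and use local
permutations in `F` off the segment. At `a k` two colors are prescribed: the one towards
`a (k - 1)` by the choice already made there, and the one towards `a (k + 1)` by the target. Since
both segments are non-backtracking, 2-transitivity of `F'` satisfies both. Only the vertices of the
segment can be singular.
-/

section RootedTrees

variable {V : Type*} {T : SimpleGraph V} {x u v p q : V}

/-- `p` is the parent of `v` when the tree `T` is rooted at `x`. Automorphisms are built by recursion
from parents to children. -/
def IsParent (T : SimpleGraph V) (x p v : V) : Prop :=
  T.Adj p v ∧ T.dist x v = T.dist x p + 1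

theorem not_isParent_root : ¬IsParent T x p x := by
  simp [IsParent]

theorem exists_isParent (hT : T.Connected) (hv : v ≠ x) : ∃ p, IsParent T x p v := by
  obtain ⟨W, hW⟩ := hT.exists_walk_length_eq_dist x v
  have hnil : ¬W.Nil := fun h => hv h.eq.symm
  have hle : T.dist x W.penultimate ≤ W.dropLast.length := SimpleGraph.dist_le _
  have hlen := W.length_dropLast_add_one hnil
  have hadj := W.adj_penultimate hnil
  exact ⟨W.penultimate, hadj, by have := hadj.diff_dist_adj (u := x); omega⟩

theorem IsParent.unique (hT : T.IsTree) (hp : IsParent T x p v) (hq : IsParent T x q v) :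
    p = q := by
  have isPath_concat {r : V} (hr : IsParent T x r v) (W : T.Walk x r)
      (hW : W.length = T.dist x r) : (W.concat hr.1).IsPath :=
    SimpleGraph.Walk.isPath_of_length_eq_dist _ (by rw [SimpleGraph.Walk.length_concat, hW, hr.2])
  obtain ⟨P, hP⟩ := hT.connected.exists_walk_length_eq_dist x p
  obtain ⟨Q, hQ⟩ := hT.connected.exists_walk_length_eq_dist x q
  have hPQ := (hT.existsUnique_path x v).unique (isPath_concat hp P hP) (isPath_concat hq Q hQ)
  simpa using congrArg SimpleGraph.Walk.penultimate hPQ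

theorem isParent_or_isParent_of_adj (hT : T.IsTree) (x : V) (h : T.Adj u v) :
    IsParent T x u v ∨ IsParent T x v u :=
  (hT.dist_eq_dist_add_one_of_adj x h).symm.imp (⟨h, ·⟩) (⟨h.symm, ·⟩)

theorem even_dist_or_even_dist_of_adj (hT : T.IsTree) (x : V) (h : T.Adj u v) :
    Even (T.dist x u) ∨ Even (T.dist x v) := by
  have := hT.dist_eq_dist_add_one_of_adj x h
  grind

theorem exists_forall_isParent_of_extend {β : Type*} (hT : T.IsTree) (S : V → Set β)
    (R : V → V → β → β → Prop) {b₀ : β} (hb₀ : b₀ ∈ S x)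
    (hext : ∀ ⦃p v⦄, IsParent T x p v → ∀ b ∈ S p, ∃ b' ∈ S v, R p v b b') :
    ∃ f : V → β, f x = b₀ ∧ (∀ v, f v ∈ S v) ∧
      ∀ ⦃p v⦄, IsParent T x p v → R p v (f p) (f v) := by
  classical
  choose parent hparent using fun v (hv : v ≠ x) => exists_isParent hT.connected hv
  choose ext hextS hextR using hext
  let f : (v : V) → S v := (measure (T.dist x)).wf.fix fun v ih =>
    if hv : v = x then ⟨b₀, hv ▸ hb₀⟩ else
      have hp := hparent v hv
      let b := ih (parent v hv) (Nat.lt_of_lt_of_eq (Nat.lt_succ_self _) hp.2.symm)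
      ⟨ext hp b b.2, hextS hp b b.2⟩
  have hf_root : (f x : β) = b₀ := by
    simp only [f]
    rw [WellFounded.fix_eq, dif_pos rfl]
  have hf_ne (v : V) (hv : v ≠ x) :
      (f v : β) = ext (hparent v hv) (f (parent v hv)) (f (parent v hv)).2 := by
    simp only [f]
    rw [WellFounded.fix_eq, dif_neg hv]
  refine ⟨fun v => f v, hf_root, fun v => (f v).2, fun p v hpv => ?_⟩
  have hv : v ≠ x := fun h => not_isParent_root (h ▸ hpv)
  obtain rfl := (hparent v hv).unique hT hpv
  simp only [hf_ne v hv]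
  exact hextR _ _ _

end RootedTrees

section NonBacktracking

variable {V W : Type*} {T : SimpleGraph V} {T' : SimpleGraph W} {a : ℕ → V} {n k : ℕ}

/-- The vertices `a 0, …, a n` form a walk that never immediately returns along the edge it came
from. Only the values of `a` at the indices up to `n` matter. In a tree these walks are exactly the
geodesic segments. -/
structure IsNonBacktracking (T : SimpleGraph V) (a : ℕ → V) (n : ℕ) : Prop where
  adj : ∀ ⦃k⦄, k < n → T.Adj (a k) (a (k + 1))
  ne : ∀ ⦃k⦄, k + 1 < n → a k ≠ a (k + 2)

theorem isNonBacktracking_getVert {x y : V} {P : T.Walk x y} (hP : P.IsPath) :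
    IsNonBacktracking T P.getVert P.length where
  adj _ hk := P.adj_getVert_succ hk
  ne k hk h := by
    have := hP.getVert_injOn (show k ≤ P.length by omega) (show k + 2 ≤ P.length by omega) h
    omega

theorem IsNonBacktracking.map (ha : IsNonBacktracking T a n) (f : T →g T')
    (hf : ∀ v, Set.InjOn f (T.neighborSet v)) : IsNonBacktracking T' (f ∘ a) n where
  adj _ hk := f.map_adj (ha.adj hk)
  ne k hk h :=
    ha.ne hk (hf (a (k + 1)) (ha.adj (Nat.lt_of_succ_lt hk)).symm (ha.adj hk) h)

theorem IsNonBacktracking.isParent (hT : T.IsTree) (ha : IsNonBacktracking T a n) (hk : k < n) :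
    IsParent T (a 0) (a k) (a (k + 1)) := by
  induction k with
  | zero => exact ⟨ha.adj hk, by simpa using ha.adj hk⟩
  | succ k ih =>
    refine (isParent_or_isParent_of_adj hT (a 0) (ha.adj hk)).resolve_right fun h => ?_
    exact ha.ne hk ((ih (by omega)).unique hT h)

theorem IsNonBacktracking.dist_eq (hT : T.IsTree) (ha : IsNonBacktracking T a n) (hk : k ≤ n) :
    T.dist (a 0) (a k) = k := by
  induction k with
  | zero => exact T.dist_self
  | succ k ih => rw [(ha.isParent hT hk).2, ih (by omega)]

theorem IsNonBacktracking.injOn (hT : T.IsTree) (ha : IsNonBacktracking T a n) :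
    Set.InjOn a (Set.Iic n) := fun j hj k hk h => by
  rw [← ha.dist_eq hT hj, h, ha.dist_eq hT hk]

theorem dist_map_of_injOn_neighborSet (hT : T.Connected) (hT' : T'.IsTree) (f : T →g T')
    (hf : ∀ v, Set.InjOn f (T.neighborSet v)) (u v : V) :
    T'.dist (f u) (f v) = T.dist u v := by
  obtain ⟨P, hP, hlen⟩ := hT.exists_path_of_dist u v
  rw [← hlen]
  simpa using ((isNonBacktracking_getVert hP).map f hf).dist_eq hT' le_rfl

theorem surjective_of_surjOn_neighborSet [Nonempty V] (hT' : T'.Connected) {f : V → W}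
    (hf : ∀ v, Set.SurjOn f (T.neighborSet v) (T'.neighborSet (f v))) : Function.Surjective f := by
  obtain ⟨x⟩ := ‹Nonempty V›
  have walk_end_mem_range {y y' : W} (P : T'.Walk y y') (hy : y ∈ Set.range f) :
      y' ∈ Set.range f := by
    induction P with
    | nil => exact hy
    | cons hadj _ ih =>
      obtain ⟨v, rfl⟩ := hy
      obtain ⟨w, -, hw⟩ := hf v hadj
      exact ih ⟨w, hw⟩
  exact fun y => walk_end_mem_range (hT'.preconnected (f x) y).some ⟨x, rfl⟩

theorem mem_support_of_dist_add_dist_eq (hT : T.IsTree) {x y z : V} {P : T.Walk x y}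
    (hP : P.IsPath) (hz : T.dist x z + T.dist z y = T.dist x y) : z ∈ P.support := by
  obtain ⟨Q, hQ⟩ := hT.connected.exists_walk_length_eq_dist x z
  obtain ⟨R, hR⟩ := hT.connected.exists_walk_length_eq_dist z y
  have hQR : (Q.append R).IsPath := SimpleGraph.Walk.isPath_of_length_eq_dist _ (by
    rw [SimpleGraph.Walk.length_append, hQ, hR, hz])
  rw [(hT.existsUnique_path x y).unique hP hQR]
  exact (SimpleGraph.Walk.mem_support_append_iff _ _).2 (.inl Q.end_mem_support)

end NonBacktracking

section LegalColorings

variable {V : Type*} {d : ℕ} {T : SimpleGraph V} (C : LegalColoring T d)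

theorem LegalColoring.eq_of_color_eq {v w w' : V} (h : T.Adj v w) (h' : T.Adj v w')
    (hc : C.color v w = C.color v w') : w = w' :=
  (C.bij v (C.color v w')).unique ⟨h, hc⟩ ⟨h', rfl⟩

theorem LegalColoring.color_ne_color_succ {a : ℕ → V} {n k : ℕ} (ha : IsNonBacktracking T a n)
    (hk : k + 1 < n) : C.color (a k) (a (k + 1)) ≠ C.color (a (k + 1)) (a (k + 2)) := by
  have hback := (ha.adj (Nat.lt_of_succ_lt hk)).symm
  rw [← C.symm hback]
  exact fun h => ha.ne hk (C.eq_of_color_eq hback (ha.adj hk) h)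

theorem LegalColoring.exists_mem_autSubgroup_eq_hom (hT : T.IsTree) (f : T →g T)
    (σ : V → Equiv.Perm (Fin d))
    (hσ : ∀ ⦃v w⦄, T.Adj v w → C.color (f v) (f w) = σ v (C.color v w)) :
    ∃ g ∈ T.autSubgroup, ⇑g = f := by
  have hinj (v : V) : Set.InjOn f (T.neighborSet v) := fun w hw w' hw' h =>
    C.eq_of_color_eq hw hw' <| (σ v).injective <| by rw [← hσ hw, ← hσ hw', h]
  have hsurj (v : V) : Set.SurjOn f (T.neighborSet v) (T.neighborSet (f v)) := fun y hy => by
    obtain ⟨w, ⟨hw, hwc⟩, -⟩ := C.bij v ((σ v).symm (C.color (f v) y))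
    refine ⟨w, hw, C.eq_of_color_eq (f.map_adj hw) hy ?_⟩
    rw [hσ hw, hwc, Equiv.apply_symm_apply]
  have hdist := dist_map_of_injOn_neighborSet hT.connected hT f hinj
  have hf_inj : Function.Injective f := fun u v h => by
    rw [← hT.connected.dist_eq_zero_iff, ← hdist, h, T.dist_self]
  have := hT.connected.nonempty
  refine ⟨Equiv.ofBijective f ⟨hf_inj, surjective_of_surjOn_neighborSet hT.connected hsurj⟩,
    fun u v => ?_, rfl⟩
  rw [← SimpleGraph.dist_eq_one_iff_adj, ← SimpleGraph.dist_eq_one_iff_adj, ← hdist u v]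
  rfl

theorem LegalColoring.exists_mem_autSubgroup_of_extend (hT : T.IsTree) {x : V} (x' : V)
    (P : V → Set (Equiv.Perm (Fin d))) (hroot : (P x).Nonempty)
    (hext : ∀ ⦃p v⦄, IsParent T x p v → ∀ σ ∈ P p, ∃ π ∈ P v,
      π (C.color p v) = σ (C.color p v)) :
    ∃ g ∈ T.autSubgroup, g x = x' ∧ ∀ v, ∃ π ∈ P v, ∀ ⦃w⦄, T.Adj v w →
      C.color (g v) (g w) = π (C.color v w) := by
  obtain ⟨σ₀, hσ₀⟩ := hroot
  obtain ⟨f, hfx, hfP, hf⟩ := exists_forall_isParent_of_extend hT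
    (fun v => {b : V × Equiv.Perm (Fin d) | b.2 ∈ P v})
    (fun p v b b' => (T.Adj b.1 b'.1 ∧ C.color b.1 b'.1 = b.2 (C.color p v)) ∧
      b'.2 (C.color p v) = b.2 (C.color p v))
    (b₀ := (x', σ₀)) hσ₀ (fun p v hpv b hb => by
      obtain ⟨π, hπ, hπc⟩ := hext hpv b.2 hb
      obtain ⟨w, hw, -⟩ := C.bij b.1 (b.2 (C.color p v))
      exact ⟨(w, π), hπ, hw, hπc⟩)
  have hadj {v w : V} (h : T.Adj v w) : T.Adj (f v).1 (f w).1 :=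
    (isParent_or_isParent_of_adj hT x h).elim (fun hp => (hf hp).1.1) fun hp => (hf hp).1.1.symm
  have hcolor ⦃v w : V⦄ (h : T.Adj v w) :
      C.color (f v).1 (f w).1 = (f v).2 (C.color v w) := by
    rcases isParent_or_isParent_of_adj hT x h with hp | hp
    · exact (hf hp).1.2
    · rw [C.symm (hadj h), (hf hp).1.2, C.symm h, (hf hp).2]
  obtain ⟨g, hg, hgf⟩ := C.exists_mem_autSubgroup_eq_hom hT ⟨fun v => (f v).1, hadj⟩ _ hcolor
  refine ⟨g, hg, by simp [hgf, hfx], fun v => ⟨(f v).2, hfP v, fun w h => ?_⟩⟩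
  simpa [hgf] using hcolor h

end LegalColorings

section Segments

variable {V : Type*} {d : ℕ} {T : SimpleGraph V} (C : LegalColoring T d)
  {F F' : Subgroup (Equiv.Perm (Fin d))} {a q : ℕ → V} {n : ℕ}

/-- The local permutations allowed at `v` for an element of `G(F, F')` that maps `a 0, …, a n` to
`q 0, …, q n`: they lie in `F` unless `v` is one of `a 0, …, a (n - 1)`, and at `a k` they send the
color of the next edge of the first segment to that of the second. -/
def segmentLocalPerms (F F' : Subgroup (Equiv.Perm (Fin d))) (a q : ℕ → V) (n : ℕ) (v : V) :
    Set (Equiv.Perm (Fin d)) :=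
  {π | π ∈ F' ∧ (v ∉ a '' Set.Iio n → π ∈ F) ∧
    ∀ k < n, v = a k → π (C.color (a k) (a (k + 1))) = C.color (q k) (q (k + 1))}

theorem segmentLocalPerms_root_nonempty (hle : F ≤ F') (hF : MulAction.IsPretransitive F (Fin d))
    (hT : T.IsTree) (ha : IsNonBacktracking T a n) :
    (segmentLocalPerms C F F' a q n (a 0)).Nonempty := by
  obtain ⟨π, hπ⟩ := hF.exists_smul_eq (C.color (a 0) (a 1)) (C.color (q 0) (q 1))
  refine ⟨π, hle π.2, fun _ => π.2, fun k hk h => ?_⟩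
  obtain rfl : 0 = k := ha.injOn hT n.zero_le hk.le h
  exact hπ

theorem exists_mem_segmentLocalPerms_of_isParent (hle : F ≤ F')
    (hF : MulAction.IsPretransitive F (Fin d))
    (hF' : MulAction.IsMultiplyPretransitive F' (Fin d) 2) (hT : T.IsTree)
    (ha : IsNonBacktracking T a n) (hq : IsNonBacktracking T q n) {p v : V}
    (hpv : IsParent T (a 0) p v) {σ : Equiv.Perm (Fin d)}
    (hσ : σ ∈ segmentLocalPerms C F F' a q n p) :
    ∃ π ∈ segmentLocalPerms C F F' a q n v, π (C.color p v) = σ (C.color p v) := by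
  by_cases hv : v ∈ a '' Set.Iio n
  · obtain ⟨_ | k, hk, rfl⟩ := hv
    · exact absurd hpv not_isParent_root
    have hk' : k < n := Nat.lt_of_succ_lt hk
    obtain rfl : p = a k := hpv.unique hT (ha.isParent hT hk')
    obtain ⟨π, hprev, hnext⟩ := MulAction.is_two_pretransitive_iff.1 hF'
      (C.color_ne_color_succ ha hk) (C.color_ne_color_succ hq hk)
    refine ⟨π, ⟨π.2, fun h => absurd ⟨k + 1, hk, rfl⟩ h, fun l hl h => ?_⟩,
      hprev.trans (hσ.2.2 k hk' rfl).symm⟩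
    obtain rfl : k + 1 = l := ha.injOn hT (Set.mem_Iic.2 hk.le) (Set.mem_Iic.2 hl.le) h
    exact hnext
  · obtain ⟨π, hπ⟩ := hF.exists_smul_eq (C.color p v) (σ (C.color p v))
    exact ⟨π, ⟨hle π.2, fun _ => π.2, fun k hk h => absurd ⟨k, hk, h.symm⟩ hv⟩, hπ⟩

theorem map_eq_of_segmentLocalPerms {g : Equiv.Perm V} (hg : g ∈ T.autSubgroup)
    (ha : IsNonBacktracking T a n) (hq : IsNonBacktracking T q n) (h₀ : g (a 0) = q 0)
    (hloc : ∀ v, ∃ π ∈ segmentLocalPerms C F F' a q n v, ∀ ⦃w⦄, T.Adj v w →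
      C.color (g v) (g w) = π (C.color v w)) {k : ℕ} (hk : k ≤ n) : g (a k) = q k := by
  induction k with
  | zero => exact h₀
  | succ k ih =>
    have hgk : g (a k) = q k := ih (by omega)
    have hadj := ha.adj hk
    obtain ⟨π, hπ, hcolor⟩ := hloc (a k)
    have hgadj : T.Adj (q k) (g (a (k + 1))) := hgk ▸ (hg _ _).2 hadj
    refine C.eq_of_color_eq hgadj (hq.adj hk) ?_
    rw [← hgk, hcolor hadj, hπ.2.2 k hk rfl, hgk]

theorem exists_mem_GFFSet_map_eq (hle : F ≤ F') (hF : MulAction.IsPretransitive F (Fin d))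
    (hF' : MulAction.IsMultiplyPretransitive F' (Fin d) 2) (hT : T.IsTree)
    (ha : IsNonBacktracking T a n) (hq : IsNonBacktracking T q n) :
    ∃ g ∈ GFFSet T C F F', ∀ k ≤ n, g (a k) = q k := by
  obtain ⟨g, hg, h₀, hloc⟩ := C.exists_mem_autSubgroup_of_extend hT (q 0)
    (segmentLocalPerms C F F' a q n) (segmentLocalPerms_root_nonempty C hle hF hT ha)
    fun p v hpv σ hσ => exists_mem_segmentLocalPerms_of_isParent C hle hF hF' hT ha hq hpv hσ
  refine ⟨g, ⟨⟨hg, ?_⟩, hg, fun v => ?_⟩,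
    fun k hk => map_eq_of_segmentLocalPerms C hg ha hq h₀ hloc hk⟩
  · refine ((Set.finite_Iio n).image a).subset fun v hv => ?_
    by_contra hva
    obtain ⟨π, hπ, hcolor⟩ := hloc v
    exact hv ⟨π, hπ.2.1 hva, hcolor⟩
  · obtain ⟨π, hπ, hcolor⟩ := hloc v
    exact ⟨π, hπ.1, hcolor⟩

end Segments

theorem isPretransitive_of_forall_exists_apply_eq {α : Type*} {F F' : Subgroup (Equiv.Perm α)}
    (horb : ∀ π' ∈ F', ∀ i, ∃ π ∈ F, π i = π' i) (hF' : MulAction.IsPretransitive F' α) :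
    MulAction.IsPretransitive F α where
  exists_smul_eq i j := by
    obtain ⟨π', rfl⟩ := hF'.exists_smul_eq i j
    obtain ⟨π, hπ, h⟩ := horb π' π'.2 i
    exact ⟨⟨π, hπ⟩, h⟩

theorem GFF_transitive_on_segments_general {V : Type*} {d : ℕ}
    {F F' : Subgroup (Equiv.Perm (Fin d))} (hle : F ≤ F')
    (hF : MulAction.IsPretransitive F (Fin d))
    (hF' : MulAction.IsMultiplyPretransitive F' (Fin d) 2)
    {T : SimpleGraph V} (hT : T.IsTree) (C : LegalColoring T d) :
    (∀ x y x' y' : V, T.dist x y = T.dist x' y' →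
      ∃ g ∈ GFFSet T C F F', g x = x' ∧ g y = y') ∧
    (∀ L : ℤ → V, Function.Injective L → (∀ i : ℤ, T.Adj (L i) (L (i + 1))) →
      ∀ x y : V, ∃ g ∈ GFFSet T C F F',
        (∀ z : V, T.dist x z + T.dist z y = T.dist x y → g z ∈ Set.range L) ∧
        Even (T.dist x (g x))) := by
  refine ⟨fun x y x' y' hxy => ?_, fun L hL hLadj x y => ?_⟩
  · obtain ⟨P, hP, hlen⟩ := hT.connected.exists_path_of_dist x y
    obtain ⟨P', hP', hlen'⟩ := hT.connected.exists_path_of_dist x' y'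
    have hlen_eq : P'.length = P.length := by rw [hlen, hlen', hxy]
    obtain ⟨g, hg, hmap⟩ := exists_mem_GFFSet_map_eq C hle hF hF' hT
      (isNonBacktracking_getVert hP) (hlen_eq ▸ isNonBacktracking_getVert hP')
    have hend : g (P.getVert P.length) = P'.getVert P'.length := by
      rw [hlen_eq, hmap _ le_rfl]
    exact ⟨g, hg, by simpa using hmap 0 (Nat.zero_le _), by simpa using hend⟩
  · obtain ⟨i, hi⟩ : ∃ i, Even (T.dist x (L i)) :=
      (even_dist_or_even_dist_of_adj hT x (hLadj 0)).elim (⟨_, ·⟩) (⟨_, ·⟩)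
    obtain ⟨P, hP⟩ := (hT.existsUnique_path x y).exists
    have hray : IsNonBacktracking T (fun k : ℕ => L (i + k)) P.length :=
      ⟨fun k _ => by simpa [add_assoc] using hLadj (i + k),
        fun k _ h => by have := hL h; omega⟩
    obtain ⟨g, hg, hmap⟩ :=
      exists_mem_GFFSet_map_eq C hle hF hF' hT (isNonBacktracking_getVert hP) hray
    refine ⟨g, hg, fun z hz => ?_, ?_⟩
    · obtain ⟨k, rfl, hk⟩ := SimpleGraph.Walk.mem_support_iff_exists_getVert.1
        (mem_support_of_dist_add_dist_eq hT hP hz)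
      exact ⟨i + k, (hmap k hk).symm⟩
    · have hgx : g x = L i := by simpa using hmap 0 (Nat.zero_le _)
      rwa [hgx]

/-- If `F'` is 2-transitive (and preserves the `F`-orbits), then `G(F, F')` acts
transitively on ordered geodesic segments of every fixed length; moreover every
geodesic segment can be moved into any given geodesic line with even displacement. -/
theorem GFF_transitive_on_segments {V : Type*} (d : ℕ) (hd : 3 ≤ d)
    (F F' : Subgroup (Equiv.Perm (Fin d))) (hle : F ≤ F')
    (horb : ∀ π' ∈ F', ∀ i : Fin d, ∃ π ∈ F, π i = π' i)
    (h2t : ∀ i j k l : Fin d, i ≠ j → k ≠ l → ∃ π ∈ F', π i = k ∧ π j = l)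
    (T : SimpleGraph V) (hT : T.IsTree) (C : LegalColoring T d) :
    (∀ x y x' y' : V, T.dist x y = T.dist x' y' →
      ∃ g ∈ GFFSet T C F F', g x = x' ∧ g y = y') ∧
    (∀ L : ℤ → V, Function.Injective L → (∀ i : ℤ, T.Adj (L i) (L (i + 1))) →
      ∀ x y : V, ∃ g ∈ GFFSet T C F F',
        (∀ z : V, T.dist x z + T.dist z y = T.dist x y → g z ∈ Set.range L) ∧
        Even (T.dist x (g x))) := by
  have hF' : MulAction.IsMultiplyPretransitive F' (Fin d) 2 :=
    MulAction.is_two_pretransitive_iff.2 fun {i j k l} hij hkl =>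
      let ⟨π, hπ, hi, hj⟩ := h2t i j k l hij hkl
      ⟨⟨π, hπ⟩, hi, hj⟩
  exact GFF_transitive_on_segments_general hle (isPretransitive_of_forall_exists_apply_eq horb
    MulAction.isPretransitive_of_is_two_pretransitive) hF' hT C
end

section
/- Let d ≥ 3, Ω = {1,…,d}, and let F ≤ F' ≤ Sym(Ω) be permutation groups such that every element of F' maps each F-orbit onto itself, and assume that F acts freely on Ω (every nontrivial element of F has no fixed point in Ω). Let T be a legally colored d-regular tree. Then every finitely generated subgroup of G(F,F') that is isomorphic to the direct product A × B of two nontrivial groups is finite. -/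
/-! An infinite finitely generated subgroup `H` of `G(F)` contains a hyperbolic automorphism `h`.
Otherwise an ultrametric inequality between displacements, after Serre, bounds an orbit. Then the
local permutations of all elements of `H` lie in `F` outside one ball, and since `F` acts freely,
an element fixing a slightly larger ball is trivial, so `H` is finite.

The centralizer of `h` in `H` preserves the attracting end of `h`, and translation towards that end
is a homomorphism from it to `ℤ`. This homomorphism is injective: an element of translation length
`0` fixes some vertex `x`, hence also every `h ^ n x` and the path from `x` to `h ^ n x`. For large
`n` its local permutations near `h ^ n x` lie in `F`, so fixing one edge there makes it fix
arbitrarily large balls around `h ^ n x`; moving these balls back by `h ^ n` shows that it is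
trivial.

In `A × B`, however, every centralizer contains a product of two nontrivial groups, and such a
product does not embed in `ℤ`. -/

section TreeMetric

variable {V : Type*} {T : SimpleGraph V}

theorem exists_adj_dist_eq_add_one (hT : T.Connected) {x y : V} (hxy : x ≠ y) :
    ∃ u, T.Adj x u ∧ T.dist x y = T.dist u y + 1 := by
  obtain ⟨p, hp⟩ := hT.exists_walk_length_eq_dist x y
  cases p with
  | nil => exact absurd rfl hxy
  | @cons _ u _ hu q =>
    have hq := SimpleGraph.dist_le q
    have htri := hT.dist_triangle (u := x) (v := u) (w := y)
    have hxu := SimpleGraph.dist_eq_one_iff_adj.mpr hu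
    simp only [SimpleGraph.Walk.length_cons] at hp
    exact ⟨u, hu, by omega⟩

theorem exists_dist_eq_and_add_eq (hT : T.Connected) (x y : V) {k : ℕ} (hk : k ≤ T.dist x y) :
    ∃ v, T.dist x v = k ∧ k + T.dist v y = T.dist x y := by
  induction k with
  | zero => exact ⟨x, by simp⟩
  | succ k ih =>
    obtain ⟨v, hxv, hvy⟩ := ih (by omega)
    obtain ⟨u, hu, huy⟩ := exists_adj_dist_eq_add_one hT (x := v) (y := y) (by
      rintro rfl
      simp only [SimpleGraph.dist_self] at hvy
      omega)
    have hxu := hT.dist_triangle (u := x) (v := v) (w := u)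
    have hxy := hT.dist_triangle (u := x) (v := u) (w := y)
    have hvu := SimpleGraph.dist_eq_one_iff_adj.mpr hu
    exact ⟨u, by omega, by omega⟩

theorem eq_of_adj_of_dist_eq_add_one (hT : T.IsTree) {x y u u' : V}
    (hu : T.Adj x u) (hu' : T.Adj x u') (h : T.dist x y = T.dist u y + 1)
    (h' : T.dist x y = T.dist u' y + 1) : u = u' := by
  obtain ⟨p, hp⟩ := hT.connected.exists_walk_length_eq_dist u y
  obtain ⟨q, hq⟩ := hT.connected.exists_walk_length_eq_dist u' y
  have hpath : (SimpleGraph.Walk.cons hu p).IsPath :=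
    SimpleGraph.Walk.isPath_of_length_eq_dist _ (by simp [hp, h])
  have hpath' : (SimpleGraph.Walk.cons hu' q).IsPath :=
    SimpleGraph.Walk.isPath_of_length_eq_dist _ (by simp [hq, h'])
  simpa using congrArg SimpleGraph.Walk.snd ((hT.existsUnique_path x y).unique hpath hpath')

theorem dist_eq_add_of_adj (hT : T.IsTree) {x y z u : V} (hu : T.Adj x u)
    (hy : T.dist x y = T.dist u y + 1) (hz : T.dist u z = T.dist x z + 1) :
    T.dist y z = T.dist x y + T.dist x z := by
  induction hn : T.dist u y generalizing x u with
  | zero =>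
    obtain rfl := hT.connected.dist_eq_zero_iff.mp hn
    omega
  | succ n ih =>
    obtain ⟨w, hw, hwy⟩ := exists_adj_dist_eq_add_one hT.connected (x := u) (y := y) (by
      rintro rfl; simp at hn)
    -- A neighbour `w` of `u` closer to `z` than `u` could only be `x`, which is farther from `y`.
    have hwz : T.dist w z = T.dist u z + 1 := by
      have := hT.dist_eq_dist_add_one_of_adj z hw
      simp only [SimpleGraph.dist_comm (u := z)] at this
      refine this.resolve_left fun hcloser => ?_
      obtain rfl := eq_of_adj_of_dist_eq_add_one hT hw hu.symm hcloser hz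
      omega
    have := ih hw hwy hwz (by omega)
    omega

theorem dist_add_dist_le_max (hT : T.IsTree) (x y z w : V) :
    T.dist x y + T.dist z w ≤
      max (T.dist x z + T.dist y w) (T.dist x w + T.dist y z) := by
  induction hn : T.dist x y generalizing x with
  | zero =>
    obtain rfl := hT.connected.dist_eq_zero_iff.mp hn
    have := hT.connected.dist_triangle (u := z) (v := x) (w := w)
    rw [SimpleGraph.dist_comm (u := z) (v := x)] at this
    omega
  | succ n ih =>
    obtain ⟨u, hu, huy⟩ := exists_adj_dist_eq_add_one hT.connected (x := x) (y := y) (by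
      rintro rfl; simp at hn)
    have hz := hT.dist_eq_dist_add_one_of_adj z hu
    have hw := hT.dist_eq_dist_add_one_of_adj w hu
    simp only [SimpleGraph.dist_comm (u := z), SimpleGraph.dist_comm (u := w)] at hz hw
    have hzw := hT.connected.dist_triangle (u := z) (v := x) (w := w)
    simp only [SimpleGraph.dist_comm (u := z)] at hzw ⊢
    rcases hz with hz | hz
    · rcases hw with hw | hw
      · have := ih u (by omega)
        simp only [SimpleGraph.dist_comm (u := z)] at this
        omega
      · have := dist_eq_add_of_adj hT hu huy hw
        omega
    · have := dist_eq_add_of_adj hT hu huy hz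
      omega

theorem dist_add_dist_eq_of_lt (hT : T.IsTree) {p q r s : V}
    (h : T.dist p q + T.dist r s < T.dist p r + T.dist q s) :
    T.dist p r + T.dist q s = T.dist p s + T.dist q r := by
  have h₁ := dist_add_dist_le_max hT p r q s
  have h₂ := dist_add_dist_le_max hT p s q r
  simp only [SimpleGraph.dist_comm (u := s), SimpleGraph.dist_comm (u := r) (v := q)] at h₁ h₂
  omega

theorem eq_of_dist_eq_of_dist_add_dist_eq (hT : T.IsTree) {p q y y' : V}
    (hp : T.dist p y' = T.dist p y) (hq : T.dist y' q = T.dist y q)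
    (hy : T.dist p y + T.dist y q = T.dist p q) : y' = y := by
  have := dist_add_dist_le_max hT y' y p q
  rw [SimpleGraph.dist_comm (u := y') (v := p), SimpleGraph.dist_comm (u := y) (v := p)] at this
  exact hT.connected.dist_eq_zero_iff.mp (by omega)

theorem dist_eq_dist_of_dist_le_two_mul (hT : T.IsTree) {x p y z : V}
    (hpz : T.dist p z = T.dist x z) (hy : T.dist x y + T.dist y z = T.dist x z)
    (hxp : T.dist x p ≤ 2 * T.dist x y) : T.dist p y = T.dist x y := by
  have h₁ := dist_add_dist_le_max hT p y x z
  have h₂ := hT.connected.dist_triangle (u := p) (v := y) (w := z)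
  rw [SimpleGraph.dist_comm (u := p) (v := x), SimpleGraph.dist_comm (u := y) (v := x)] at h₁
  omega

/-- Twice the Gromov product `(y | z)_x`, the distance in a tree from `x` to the path from `y` to
`z`. In terms of it the four-point condition is an ultrametric inequality. -/
noncomputable def twoGromovProd (T : SimpleGraph V) (x y z : V) : ℤ :=
  T.dist x y + T.dist x z - T.dist y z

theorem twoGromovProd_comm (x y z : V) : twoGromovProd T x y z = twoGromovProd T x z y := by
  rw [twoGromovProd, twoGromovProd, SimpleGraph.dist_comm (u := y)]
  ring

theorem min_twoGromovProd_le (hT : T.IsTree) (x y z w : V) :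
    min (twoGromovProd T x y z) (twoGromovProd T x z w) ≤ twoGromovProd T x y w := by
  have := dist_add_dist_le_max hT y w x z
  rw [SimpleGraph.dist_comm (u := y) (v := x), SimpleGraph.dist_comm (u := w) (v := x),
    SimpleGraph.dist_comm (u := w) (v := z)] at this
  simp only [twoGromovProd]
  omega

end TreeMetric

section Automorphisms

variable {V : Type*} {T : SimpleGraph V} {g h c : Equiv.Perm V} {x y z : V}

theorem dist_apply_apply (hg : g ∈ T.autSubgroup) (u v : V) :
    T.dist (g u) (g v) = T.dist u v := by
  let f : T ≃g T := ⟨g, hg _ _⟩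
  have hf : ∀ w, f.symm (g w) = w := f.symm_apply_apply
  rw [SimpleGraph.dist_eq_sInf, SimpleGraph.dist_eq_sInf]
  congr 1
  ext n
  constructor
  · rintro ⟨p, rfl⟩
    exact ⟨(p.map f.symm.toHom).copy (hf u) (hf v), by simp⟩
  · rintro ⟨p, rfl⟩
    exact ⟨p.map f.toHom, by simp⟩

theorem dist_inv_apply_left (hg : g ∈ T.autSubgroup) (u v : V) :
    T.dist (g⁻¹ u) v = T.dist u (g v) := by
  rw [← dist_apply_apply hg, Equiv.Perm.coe_inv, Equiv.apply_symm_apply]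

theorem dist_inv_apply_self (hg : g ∈ T.autSubgroup) (x : V) :
    T.dist x (g⁻¹ x) = T.dist x (g x) := by
  rw [SimpleGraph.dist_comm, dist_inv_apply_left hg]

theorem apply_pow_apply_of_commute (hcomm : Commute c h) (n : ℕ) (x : V) :
    c ((h ^ n) x) = (h ^ n) (c x) :=
  Equiv.congr_fun (hcomm.pow_right n).eq x

theorem dist_apply_pow_of_commute (hh : h ∈ T.autSubgroup) (hcomm : Commute c h) (n : ℕ) (x : V) :
    T.dist ((h ^ n) x) (c ((h ^ n) x)) = T.dist x (c x) := by
  rw [apply_pow_apply_of_commute hcomm, dist_apply_apply (T.autSubgroup.pow_mem hh n)]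

theorem dist_apply_add_dist_eq (hT : T.IsTree) (hc : c ∈ T.autSubgroup) {z' : V}
    (hfar : T.dist x (c x) + T.dist z' z < T.dist x z) :
    T.dist x (c z') + T.dist x z = T.dist x (c z) + T.dist x z' := by
  have hcx : T.dist (c⁻¹ x) x = T.dist x (c x) := dist_inv_apply_left hc x x
  have := dist_add_dist_eq_of_lt hT (p := c⁻¹ x) (q := x) (r := z') (s := z) (by omega)
  rwa [dist_inv_apply_left hc, dist_inv_apply_left hc] at this

theorem apply_eq_of_dist_add_dist_eq (hT : T.IsTree) (hc : c ∈ T.autSubgroup) (hx : c x = x)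
    (hz : c z = z) (hy : T.dist x y + T.dist y z = T.dist x z) : c y = y := by
  refine eq_of_dist_eq_of_dist_add_dist_eq hT ?_ ?_ hy
  · conv_lhs => rw [← hx, dist_apply_apply hc]
  · conv_lhs => rw [← hz, dist_apply_apply hc]

theorem exists_apply_eq_of_dist_eq (hT : T.IsTree) (hc : c ∈ T.autSubgroup)
    (hxz : T.dist z (c z) = T.dist x (c x)) (hfar : 2 * T.dist x (c x) < T.dist x z)
    (hs : T.dist x (c z) = T.dist x z) : ∃ y, c y = y := by
  have hcxz : T.dist (c x) z = T.dist x z := by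
    have hiso := dist_apply_apply hc x z
    have := dist_add_dist_eq_of_lt hT (p := x) (q := c x) (r := z) (s := c z) (by omega)
    omega
  obtain ⟨y, hxy, hyz⟩ := exists_dist_eq_and_add_eq hT.connected x z (k := T.dist x (c x))
    (by omega)
  -- Both `y` and `c y` are the vertex at distance `T.dist x (c x)` from `c x` on `[c x, c z]`.
  have hy : T.dist (c x) y = T.dist x y :=
    dist_eq_dist_of_dist_le_two_mul hT hcxz (by omega) (by omega)
  have hy' : T.dist y (c z) = T.dist y z := by
    have := dist_eq_dist_of_dist_le_two_mul hT (x := z) (p := c z) (y := y) (z := x)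
    simp only [SimpleGraph.dist_comm (u := z) (v := y), SimpleGraph.dist_comm (v := x),
      SimpleGraph.dist_comm (u := c z) (v := y)] at this
    exact this hs (by omega) (by omega)
  refine ⟨y, eq_of_dist_eq_of_dist_add_dist_eq hT (p := c x) (q := c z) ?_ ?_ ?_⟩
  · rw [dist_apply_apply hc, hy]
  · rw [dist_apply_apply hc, hy']
  · rw [dist_apply_apply hc]
    omega

/-- An automorphism of a tree is hyperbolic if it translates a line. This is encoded through
displacements: if `g` translates its axis by `ℓ` and `x` is at distance `D` from it, then
`d(x, g x) = 2 D + ℓ` and `d(x, g² x) = 2 D + 2 ℓ`, while `d(x, g² x) ≤ d(x, g x)` for every `x`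
if `g` fixes a vertex or inverts an edge. -/
def IsHyperbolicAut (T : SimpleGraph V) (g : Equiv.Perm V) : Prop :=
  ∃ x, T.dist x (g x) < T.dist x (g (g x))

namespace IsHyperbolicAut

theorem dist_apply_le_of_not (hg : ¬ IsHyperbolicAut T g) (x : V) :
    T.dist x (g (g x)) ≤ T.dist x (g x) :=
  not_lt.mp fun hlt => hg ⟨x, hlt⟩

theorem dist_le_twoGromovProd_of_not (hg : g ∈ T.autSubgroup) (hell : ¬ IsHyperbolicAut T g)
    (x : V) : T.dist x (g x) ≤ twoGromovProd T x (g⁻¹ x) (g x) := by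
  have := dist_apply_le_of_not hell x
  rw [twoGromovProd, dist_inv_apply_self hg, dist_inv_apply_left hg]
  omega

theorem dist_mul_apply_le_max (hT : T.IsTree) (hg : g ∈ T.autSubgroup) (hh : h ∈ T.autSubgroup)
    (hgell : ¬ IsHyperbolicAut T g) (hhell : ¬ IsHyperbolicAut T h)
    (hghell : ¬ IsHyperbolicAut T (g * h)) (x : V) :
    T.dist x ((g * h) x) ≤ max (T.dist x (g x)) (T.dist x (h x)) := by
  have hgh := T.autSubgroup.mul_mem hg hh
  have eg := dist_le_twoGromovProd_of_not hg hgell x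
  have eh := dist_le_twoGromovProd_of_not hh hhell x
  have egh := dist_le_twoGromovProd_of_not hgh hghell x
  have hmid : twoGromovProd T x (g⁻¹ x) (h x) =
      T.dist x (g x) + T.dist x (h x) - T.dist x ((g * h) x) := by
    rw [twoGromovProd, dist_inv_apply_self hg, dist_inv_apply_left hg, Equiv.Perm.mul_apply]
  have hright : twoGromovProd T x (g x) ((g * h) x) =
      T.dist x (g x) + T.dist x ((g * h) x) - T.dist x (h x) := by
    rw [twoGromovProd, Equiv.Perm.mul_apply, dist_apply_apply hg]
  have hleft : twoGromovProd T x ((g * h)⁻¹ x) (h⁻¹ x) =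
      T.dist x ((g * h) x) + T.dist x (h x) - T.dist x (g x) := by
    rw [twoGromovProd, dist_inv_apply_self hgh, dist_inv_apply_self hh, mul_inv_rev,
      Equiv.Perm.mul_apply h⁻¹ g⁻¹, dist_apply_apply (T.autSubgroup.inv_mem hh),
      dist_inv_apply_left hg]
  -- If `g * h` displaced `x` more than `g` and `h`, these inequalities along the chain
  -- `g⁻¹ x`, `g x`, `(g * h) x`, `(g * h)⁻¹ x`, `h⁻¹ x`, `h x` would contradict `hmid`.
  have u₁ := min_twoGromovProd_le hT x (g⁻¹ x) (g x) (h x)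
  have u₂ := min_twoGromovProd_le hT x (g x) (h⁻¹ x) (h x)
  have u₃ := min_twoGromovProd_le hT x (g x) ((g * h) x) (h⁻¹ x)
  have u₄ := min_twoGromovProd_le hT x ((g * h) x) ((g * h)⁻¹ x) (h⁻¹ x)
  rw [twoGromovProd_comm] at egh
  omega

theorem dist_pow_lt_dist_pow_succ (hT : T.IsTree) (hh : h ∈ T.autSubgroup)
    (hx : T.dist x (h x) < T.dist x (h (h x))) (n : ℕ) :
    T.dist x ((h ^ n) x) < T.dist x ((h ^ (n + 1)) x) := by
  have hstep : ∀ k, (h ^ (k + 1)) x = h ((h ^ k) x) := fun k => by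
    rw [pow_succ', Equiv.Perm.mul_apply]
  induction n with
  | zero =>
    simp only [pow_zero, Equiv.Perm.coe_one, id_eq, SimpleGraph.dist_self, zero_add, pow_one]
    refine hT.connected.pos_dist_of_ne fun hfix => ?_
    rw [← hfix, ← hfix] at hx
    exact lt_irrefl _ hx
  | succ n ih =>
    have := dist_add_dist_le_max hT x (h (h x)) (h x) ((h ^ (n + 2)) x)
    rw [hstep (n + 1), hstep n, dist_apply_apply hh, dist_apply_apply hh, dist_apply_apply hh,
      ← hstep n, SimpleGraph.dist_comm (u := h (h x)), dist_apply_apply hh, ← hstep (n + 1)] at this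
    omega

theorem tendsto_dist_pow (hT : T.IsTree) (hh : h ∈ T.autSubgroup) (hhyp : IsHyperbolicAut T h)
    (x : V) : Filter.Tendsto (fun n : ℕ => T.dist x ((h ^ n) x)) Filter.atTop Filter.atTop := by
  obtain ⟨y, hy⟩ := hhyp
  refine Filter.tendsto_atTop_mono (fun n => ?_)
    (Filter.tendsto_sub_atTop_nat (2 * T.dist x y))
  have hgrow : n ≤ T.dist y ((h ^ n) y) :=
    (strictMono_nat_of_lt_succ (dist_pow_lt_dist_pow_succ hT hh hy)).le_apply
  have hiso := dist_apply_apply (T.autSubgroup.pow_mem hh n) x y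
  have h₁ := hT.connected.dist_triangle (u := y) (v := x) (w := (h ^ n) y)
  have h₂ := hT.connected.dist_triangle (u := x) (v := (h ^ n) x) (w := (h ^ n) y)
  rw [SimpleGraph.dist_comm (u := y) (v := x)] at h₁
  omega

end IsHyperbolicAut

/-- `c` displaces the points `h ^ n x`, for large `n`, by `s` as seen from `x`. When `h` is
hyperbolic and commutes with `c`, the automorphism `c` preserves the end to which the points
`h ^ n x` converge, and `s` is the translation length of `c` towards it, with sign. -/
def HasShift (T : SimpleGraph V) (h : Equiv.Perm V) (x : V) (c : Equiv.Perm V) (s : ℤ) : Prop :=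
  ∀ᶠ n : ℕ in Filter.atTop, (T.dist x (c ((h ^ n) x)) : ℤ) = T.dist x ((h ^ n) x) + s

namespace HasShift

variable {c' : Equiv.Perm V} {s s' : ℤ}

theorem unique (hs : HasShift T h x c s) (hs' : HasShift T h x c s') : s = s' := by
  obtain ⟨n, hn, hn'⟩ := (hs.and hs').exists
  omega

theorem mul (hT : T.IsTree) (hh : h ∈ T.autSubgroup) (hhyp : IsHyperbolicAut T h)
    (hc : c ∈ T.autSubgroup) (hcomm : Commute c' h) (hs : HasShift T h x c s)
    (hs' : HasShift T h x c' s') : HasShift T h x (c * c') (s + s') := by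
  filter_upwards [hs, hs', (hhyp.tendsto_dist_pow hT hh x).eventually_gt_atTop
    (T.dist x (c x) + T.dist x (c' x))] with n hn hn' hfar
  rw [← dist_apply_pow_of_commute hh hcomm n x, SimpleGraph.dist_comm (u := (h ^ n) x)] at hfar
  have := dist_apply_add_dist_eq hT hc hfar
  rw [Equiv.Perm.mul_apply]
  omega

theorem exists_of_isHyperbolicAut (hT : T.IsTree) (hh : h ∈ T.autSubgroup)
    (hhyp : IsHyperbolicAut T h) (hc : c ∈ T.autSubgroup) (x : V) : ∃ s, HasShift T h x c s := by
  obtain ⟨N, hN⟩ := Filter.eventually_atTop.mp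
    ((hhyp.tendsto_dist_pow hT hh x).eventually_gt_atTop (T.dist x (c x) + T.dist x (h x)))
  refine ⟨T.dist x (c ((h ^ N) x)) - T.dist x ((h ^ N) x), ?_⟩
  filter_upwards [Filter.eventually_ge_atTop N] with n hn
  induction n, hn using Nat.le_induction with
  | base => ring
  | succ n hn ih =>
    have hfar := hN n hn
    rw [← dist_apply_pow_of_commute hh (Commute.refl h) n x,
      SimpleGraph.dist_comm (u := (h ^ n) x)] at hfar
    have := dist_apply_add_dist_eq hT hc hfar
    rw [pow_succ', Equiv.Perm.mul_apply]
    omega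

theorem exists_apply_eq (hT : T.IsTree) (hh : h ∈ T.autSubgroup) (hhyp : IsHyperbolicAut T h)
    (hc : c ∈ T.autSubgroup) (hcomm : Commute c h) (hs : HasShift T h x c 0) : ∃ y, c y = y := by
  obtain ⟨n, hn, hfar⟩ := (hs.and ((hhyp.tendsto_dist_pow hT hh x).eventually_gt_atTop
    (2 * T.dist x (c x)))).exists
  exact exists_apply_eq_of_dist_eq hT hc (dist_apply_pow_of_commute hh hcomm n x) hfar (by omega)

end HasShift

end Automorphisms

section LocalAction

variable {V : Type*} {d : ℕ} {T : SimpleGraph V} {C : LegalColoring T d}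
  {F : Subgroup (Equiv.Perm (Fin d))} {c g h : Equiv.Perm V} {u v w x z : V}

theorem LegalColoring.finite_neighborSet (C : LegalColoring T d) (v : V) :
    (T.neighborSet v).Finite :=
  Set.Finite.of_finite_image (f := C.color v) (Set.toFinite _) fun _ hw w' hw' hww' =>
    (C.bij v (C.color v w')).unique ⟨hw, hww'⟩ ⟨hw', rfl⟩

theorem LegalColoring.finite_setOf_dist_le (C : LegalColoring T d) (hT : T.Connected) (x : V)
    (n : ℕ) : {v | T.dist x v ≤ n}.Finite := by
  induction n with
  | zero =>
    exact (Set.finite_singleton x).subset fun v hv =>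
      (hT.dist_eq_zero_iff.mp (Nat.le_zero.mp hv)).symm
  | succ n ih =>
    refine (ih.union (ih.biUnion fun v _ => C.finite_neighborSet v)).subset fun v hv => ?_
    by_cases hvx : v = x
    · exact Or.inl (by simp [hvx])
    · obtain ⟨u, hu, huv⟩ := exists_adj_dist_eq_add_one hT hvx
      rw [SimpleGraph.dist_comm, SimpleGraph.dist_comm (u := u)] at huv
      have hux : T.dist x u ≤ n := Nat.le_of_succ_le_succ (huv.symm.trans_le hv)
      exact Or.inr (Set.mem_biUnion hux hu.symm)

namespace LocalIn

theorem one (v : V) : LocalIn T C F 1 v := ⟨1, F.one_mem, fun _ _ => rfl⟩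

theorem mul (hh : h ∈ T.autSubgroup) (hg : LocalIn T C F g (h v)) (hv : LocalIn T C F h v) :
    LocalIn T C F (g * h) v := by
  obtain ⟨π, hπ, hgπ⟩ := hg
  obtain ⟨ρ, hρ, hhρ⟩ := hv
  refine ⟨π * ρ, F.mul_mem hπ hρ, fun w hw => ?_⟩
  simp only [Equiv.Perm.mul_apply, hgπ ((hh v w).mpr hw), hhρ hw]

theorem inv (hg : g ∈ T.autSubgroup) (hv : LocalIn T C F g (g⁻¹ v)) : LocalIn T C F g⁻¹ v := by
  obtain ⟨π, hπ, hgπ⟩ := hv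
  refine ⟨π⁻¹, F.inv_mem hπ, fun w hw => ?_⟩
  have := hgπ ((T.autSubgroup.inv_mem hg v w).mpr hw)
  simp only [Equiv.Perm.coe_inv, Equiv.apply_symm_apply] at this
  simp only [this, Equiv.Perm.coe_inv, Equiv.symm_apply_apply]

theorem of_mem_closure {S : Set (Equiv.Perm V)} (hS : S ⊆ T.autSubgroup)
    (hg : g ∈ Subgroup.closure S)
    (hloc : ∀ s ∈ S, ∀ k ∈ Subgroup.closure S, LocalIn T C F s (k v)) : LocalIn T C F g v := by
  have haut : Subgroup.closure S ≤ T.autSubgroup := (Subgroup.closure_le _).mpr hS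
  induction hg using Subgroup.closure_induction_left with
  | one => exact one v
  | mul_left s hs k hk ih => exact mul (haut hk) (hloc s hs k hk) ih
  | inv_mul_cancel s hs k hk ih =>
    refine mul (haut hk) (inv (hS hs) ?_) ih
    exact hloc s hs (s⁻¹ * k)
      (mul_mem (inv_mem (Subgroup.subset_closure hs)) hk)

theorem apply_eq_of_adj (hfree : ∀ π ∈ F, π ≠ 1 → ∀ i : Fin d, π i ≠ i)
    (hc : c ∈ T.autSubgroup) (hl : LocalIn T C F c u) (hu : c u = u) (huw : T.Adj u w)
    (hw : c w = w) (huv : T.Adj u v) : c v = v := by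
  obtain ⟨π, hπ, hcπ⟩ := hl
  have hπ1 : π = 1 := by
    by_contra hne
    refine hfree π hπ hne (C.color u w) ?_
    rw [← hcπ huw, hu, hw]
  have hcolor := hcπ huv
  have hadj := (hc u v).mpr huv
  rw [hu, hπ1, Equiv.Perm.one_apply] at hcolor
  rw [hu] at hadj
  exact (C.bij u (C.color u v)).unique ⟨hadj, hcolor⟩ ⟨huv, rfl⟩

theorem apply_eq_of_dist_le (hfree : ∀ π ∈ F, π ≠ 1 → ∀ i : Fin d, π i ≠ i)
    (hT : T.Connected) (hc : c ∈ T.autSubgroup) {k m : ℕ}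
    (hfix : ∀ v, T.dist z v ≤ k + 1 → c v = v)
    (hloc : ∀ v, k < T.dist z v → T.dist z v < m → LocalIn T C F c v) :
    ∀ v, T.dist z v ≤ m → c v = v := by
  intro v hv
  induction hn : T.dist z v using Nat.strong_induction_on generalizing v with
  | _ n ih =>
    by_cases hk : T.dist z v ≤ k + 1
    · exact hfix v hk
    obtain ⟨u, hu, huz⟩ := exists_adj_dist_eq_add_one hT (x := v) (y := z) (by
      rintro rfl; simp at hk)
    obtain ⟨t, ht, htz⟩ := exists_adj_dist_eq_add_one hT (x := u) (y := z) (by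
      rintro rfl
      simp only [SimpleGraph.dist_self, SimpleGraph.dist_comm (u := v)] at huz hk
      omega)
    simp only [SimpleGraph.dist_comm (v := z)] at huz htz
    exact apply_eq_of_adj hfree hc (hloc u (by omega) (by omega))
      (ih _ (by omega) u (by omega) rfl) ht (ih _ (by omega) t (by omega) rfl) hu.symm

theorem apply_eq_of_dist_le_of_apply_eq (hfree : ∀ π ∈ F, π ≠ 1 → ∀ i : Fin d, π i ≠ i)
    (hT : T.IsTree) (hc : c ∈ T.autSubgroup) (hx : c x = x) (hz : c z = z) (hzx : z ≠ x) {m : ℕ}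
    (hloc : ∀ v, T.dist z v ≤ m → LocalIn T C F c v) : ∀ v, T.dist z v ≤ m → c v = v := by
  obtain ⟨u, hzu, hux⟩ := exists_adj_dist_eq_add_one hT.connected hzx
  have hu : c u = u := apply_eq_of_dist_add_dist_eq hT hc hz hx (by
    rw [SimpleGraph.dist_eq_one_iff_adj.mpr hzu, hux, add_comm])
  have hball : ∀ v, T.dist z v ≤ 0 + 1 → c v = v := fun v hv => by
    rcases Nat.le_one_iff_eq_zero_or_eq_one.mp hv with h0 | h1
    · rwa [← hT.connected.dist_eq_zero_iff.mp h0]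
    · exact (hloc z (by simp)).apply_eq_of_adj hfree hc hz hzu hu
        (SimpleGraph.dist_eq_one_iff_adj.mp h1)
  exact apply_eq_of_dist_le hfree hT.connected hc hball fun v _ hv => hloc v hv.le

end LocalIn

theorem exists_forall_lt_dist_localIn (hc : c ∈ GSet T C F) (x : V) :
    ∃ M, ∀ v, M < T.dist x v → LocalIn T C F c v := by
  obtain ⟨M, hM⟩ := (hc.2.image (T.dist x)).bddAbove
  exact ⟨M, fun v hv => by_contra fun hl => hv.not_ge (hM (Set.mem_image_of_mem _ hl))⟩

theorem eq_one_of_commute_of_apply_eq (hfree : ∀ π ∈ F, π ≠ 1 → ∀ i : Fin d, π i ≠ i)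
    (hT : T.IsTree) (hh : h ∈ T.autSubgroup) (hhyp : IsHyperbolicAut T h)
    (hc : c ∈ GSet T C F) (hcomm : Commute c h) (hx : c x = x) : c = 1 := by
  obtain ⟨M, hM⟩ := exists_forall_lt_dist_localIn hc x
  ext w
  obtain ⟨n, hn⟩ := ((hhyp.tendsto_dist_pow hT hh x).eventually_gt_atTop
    (M + T.dist x w)).exists
  have hcn := apply_pow_apply_of_commute hcomm n
  have hloc : ∀ v, T.dist ((h ^ n) x) v ≤ T.dist x w → LocalIn T C F c v := fun v hv => by
    have := hT.connected.dist_triangle (u := x) (v := v) (w := (h ^ n) x)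
    rw [SimpleGraph.dist_comm (u := v)] at this
    exact hM v (by omega)
  have hw : c ((h ^ n) w) = (h ^ n) w :=
    LocalIn.apply_eq_of_dist_le_of_apply_eq hfree hT hc.1 hx (by rw [hcn, hx])
      (fun heq => by simp [heq] at hn) hloc _
      (dist_apply_apply (T.autSubgroup.pow_mem hh n) x w).le
  exact (h ^ n).injective (by rw [← hcn, hw, Equiv.Perm.one_apply])

theorem exists_injective_centralizer_of_isHyperbolicAut
    (hfree : ∀ π ∈ F, π ≠ 1 → ∀ i : Fin d, π i ≠ i)
    (hT : T.IsTree) {H : Subgroup (Equiv.Perm V)} (hH : (H : Set (Equiv.Perm V)) ⊆ GSet T C F)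
    (h : H) (hhyp : IsHyperbolicAut T h) :
    ∃ f : Subgroup.centralizer {h} →* Multiplicative ℤ, Function.Injective f := by
  obtain ⟨x, -⟩ := id hhyp
  have haut (c : H) : (c : Equiv.Perm V) ∈ T.autSubgroup := (hH c.2).1
  have hcomm (c : Subgroup.centralizer {h}) : Commute (c : Equiv.Perm V) (h : Equiv.Perm V) :=
    congrArg Subtype.val (Subgroup.mem_centralizer_singleton_iff.mp c.2)
  choose s hs using fun c : Subgroup.centralizer {h} =>
    HasShift.exists_of_isHyperbolicAut hT (haut h) hhyp (haut c) x
  have hmul (c c' : Subgroup.centralizer {h}) : s (c * c') = s c + s c' :=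
    (hs (c * c')).unique ((hs c).mul hT (haut h) hhyp (haut c) (hcomm c') (hs c'))
  refine ⟨MonoidHom.mk' (fun c => Multiplicative.ofAdd (s c)) fun c c' => by
    rw [hmul, ofAdd_add], (injective_iff_map_eq_one _).mpr fun c hc => ?_⟩
  have hc0 : s c = 0 := hc
  obtain ⟨y, hy⟩ := (hc0 ▸ hs c).exists_apply_eq hT (haut h) hhyp (haut c) (hcomm c)
  exact Subtype.ext (Subtype.ext
    (eq_one_of_commute_of_apply_eq hfree hT (haut h) hhyp (hH c.1.2) (hcomm c) hy))

end LocalAction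

theorem finite_of_finite_orbits {G α : Type*} [Group G] [MulAction G α] {s : Set α}
    (hs : s.Finite) (horb : ∀ a ∈ s, (MulAction.orbit G a).Finite)
    (hfix : ∀ g : G, (∀ a ∈ s, g • a = a) → g = 1) : Finite G := by
  have := hs.to_subtype
  have (a : s) := (horb a a.2).to_subtype
  let φ (g : G) (a : s) : MulAction.orbit G (a : α) := ⟨g • (a : α), MulAction.mem_orbit _ _⟩
  refine Finite.of_injective φ fun g g' hgg' => ?_
  refine (inv_mul_eq_one.mp (hfix (g⁻¹ * g') fun a ha => ?_))
  have hga : g • a = g' • a := congrArg Subtype.val (congrFun hgg' ⟨a, ha⟩)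
  rw [mul_smul, ← hga, inv_smul_smul]

section FinitelyGenerated

variable {V : Type*} {d : ℕ} {T : SimpleGraph V} {C : LegalColoring T d}
  {F : Subgroup (Equiv.Perm (Fin d))} {H : Subgroup (Equiv.Perm V)} {x : V} {R : ℕ}

theorem exists_forall_mem_localIn_of_dist_le (hT : T.Connected)
    (hH : (H : Set (Equiv.Perm V)) ⊆ GSet T C F) (hfg : H.FG)
    (hR : ∀ g ∈ H, T.dist x (g x) ≤ R) :
    ∃ M, ∀ g ∈ H, ∀ v, M < T.dist x v → LocalIn T C F g v := by
  obtain ⟨S, rfl⟩ := hfg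
  have hSG (s) (hs : s ∈ S) : s ∈ GSet T C F := hH (Subgroup.subset_closure hs)
  choose! m hm using fun s hs => exists_forall_lt_dist_localIn (hSG s hs) x
  refine ⟨R + S.sup m, fun g hg v hv => ?_⟩
  refine LocalIn.of_mem_closure (fun s hs => (hSG s hs).1) hg fun s hs k hk => hm s hs _ ?_
  have hms : m s ≤ S.sup m := Finset.le_sup hs
  have htri := hT.dist_triangle (u := k x) (v := x) (w := k v)
  rw [dist_apply_apply (hH hk).1, SimpleGraph.dist_comm (v := x)] at htri
  have := hR k hk
  omega

theorem finite_of_dist_le (hfree : ∀ π ∈ F, π ≠ 1 → ∀ i : Fin d, π i ≠ i)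
    (hT : T.Connected) (hH : (H : Set (Equiv.Perm V)) ⊆ GSet T C F) (hfg : H.FG)
    (hR : ∀ g ∈ H, T.dist x (g x) ≤ R) : Finite H := by
  obtain ⟨M, hM⟩ := exists_forall_mem_localIn_of_dist_le hT hH hfg hR
  refine finite_of_finite_orbits (C.finite_setOf_dist_le hT x (M + 1)) (fun v hv => ?_)
    fun g hg => Subtype.ext (Equiv.ext fun v => ?_)
  · refine (C.finite_setOf_dist_le hT x (R + (M + 1))).subset ?_
    rintro _ ⟨g, rfl⟩
    calc T.dist x (g.1 v) ≤ T.dist x (g.1 x) + T.dist (g.1 x) (g.1 v) := hT.dist_triangle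
      _ = T.dist x (g.1 x) + T.dist x v := by rw [dist_apply_apply (hH g.2).1]
      _ ≤ R + (M + 1) := add_le_add (hR g g.2) hv
  · exact LocalIn.apply_eq_of_dist_le hfree hT (hH g.2).1 hg (fun u hu _ => hM g g.2 u hu) v le_rfl

theorem exists_isHyperbolicAut_of_infinite (hfree : ∀ π ∈ F, π ≠ 1 → ∀ i : Fin d, π i ≠ i)
    (hT : T.IsTree) (hH : (H : Set (Equiv.Perm V)) ⊆ GSet T C F) (hfg : H.FG) [Infinite H] :
    ∃ h ∈ H, IsHyperbolicAut T h := by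
  by_contra! hell
  obtain ⟨x⟩ := hT.connected.nonempty
  have haut (g) (hg : g ∈ H) : g ∈ T.autSubgroup := (hH hg).1
  obtain ⟨S, rfl⟩ := id hfg
  refine not_finite_iff_infinite.mpr ‹_› ?_
  refine finite_of_dist_le hfree hT.connected hH hfg
    (x := x) (R := S.sup fun s => T.dist x (s x)) fun g hg => ?_
  induction hg using Subgroup.closure_induction with
  | mem s hs => exact Finset.le_sup (f := fun s : Equiv.Perm V => T.dist x (s x)) hs
  | one => simp
  | mul a b ha hb iha ihb =>
    exact (IsHyperbolicAut.dist_mul_apply_le_max hT (haut a ha) (haut b hb) (hell a ha)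
      (hell b hb) (hell _ (mul_mem ha hb)) x).trans (max_le iha ihb)
  | inv a ha iha => rwa [dist_inv_apply_self (haut a ha)]

end FinitelyGenerated

section Products

theorem nontrivial_centralizer_singleton {G : Type*} [Group G] [Nontrivial G] (g : G) :
    Nontrivial (Subgroup.centralizer {g}) := by
  rw [Subgroup.nontrivial_iff_exists_ne_one]
  by_cases hg : g = 1
  · obtain ⟨k, hk⟩ := exists_ne (1 : G)
    exact ⟨k, Subgroup.mem_centralizer_singleton_iff.mpr (by simp [hg]), hk⟩
  · exact ⟨g, Subgroup.mem_centralizer_singleton_iff.mpr rfl, hg⟩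

theorem not_injective_prod_int {K L : Type*} [Group K] [Group L] [Nontrivial K] [Nontrivial L]
    (f : K × L →* Multiplicative ℤ) : ¬ Function.Injective f := by
  intro hf
  have : IsMulTorsionFree K :=
    (hf.comp (Prod.mk_left_injective 1)).isMulTorsionFree (f.comp (.inl K L))
  obtain ⟨k, hk⟩ := exists_ne (1 : K)
  have : Infinite K := not_finite_iff_infinite.mp fun _ =>
    not_isOfFinOrder_of_isMulTorsionFree hk (isOfFinOrder_of_finite k)
  exact not_isCyclic_prod_of_infinite_nontrivial K L (isCyclic_of_injective f hf)

theorem not_injective_centralizer_of_mulEquiv_prod {G A B : Type*} [Group G] [Group A] [Group B]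
    [Nontrivial A] [Nontrivial B] (e : G ≃* A × B) (g : G)
    (f : Subgroup.centralizer {g} →* Multiplicative ℤ) : ¬ Function.Injective f := by
  have := nontrivial_centralizer_singleton (e g).1
  have := nontrivial_centralizer_singleton (e g).2
  let ι : Subgroup.centralizer {(e g).1} × Subgroup.centralizer {(e g).2} →*
      Subgroup.centralizer {g} :=
    (e.symm.toMonoidHom.comp (.prodMap (Subgroup.subtype _) (Subgroup.subtype _))).codRestrict _
      fun p => Subgroup.mem_centralizer_singleton_iff.mpr (e.injective (by
        have h₁ := Subgroup.mem_centralizer_singleton_iff.mp p.1.2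
        have h₂ := Subgroup.mem_centralizer_singleton_iff.mp p.2.2
        simpa using Prod.ext h₁ h₂))
  have hι : Function.Injective ι := by
    refine (MonoidHom.injective_codRestrict _ _ _).mpr ?_
    exact e.symm.injective.comp (Subtype.val_injective.prodMap Subtype.val_injective)
  exact fun hf => not_injective_prod_int (f.comp ι) (hf.comp hι)

end Products

theorem GFF_fg_direct_product_finite_general {V : Type*} {d : ℕ}
    {F : Subgroup (Equiv.Perm (Fin d))} (hfree : ∀ π ∈ F, π ≠ 1 → ∀ i : Fin d, π i ≠ i)
    {T : SimpleGraph V} (hT : T.IsTree) {C : LegalColoring T d}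
    {H : Subgroup (Equiv.Perm V)} (hH : (H : Set (Equiv.Perm V)) ⊆ GSet T C F) (hfg : H.FG)
    {A B : Type*} [Group A] [Group B] [Nontrivial A] [Nontrivial B]
    (e : H ≃* A × B) : Finite H := by
  by_contra hinf
  rw [not_finite_iff_infinite] at hinf
  obtain ⟨h, hh, hhyp⟩ := exists_isHyperbolicAut_of_infinite hfree hT hH hfg
  obtain ⟨f, hf⟩ := exists_injective_centralizer_of_isHyperbolicAut hfree hT hH ⟨h, hh⟩ hhyp
  exact not_injective_centralizer_of_mulEquiv_prod e ⟨h, hh⟩ f hf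

/-- If `F` acts freely on `Ω`, then every finitely generated subgroup of `G(F, F')`
which is isomorphic to a direct product of two nontrivial groups is finite. -/
theorem GFF_fg_direct_product_finite {V : Type*} (d : ℕ) (hd : 3 ≤ d)
    (F F' : Subgroup (Equiv.Perm (Fin d))) (hle : F ≤ F')
    (horb : ∀ π' ∈ F', ∀ i : Fin d, ∃ π ∈ F, π i = π' i)
    (hfree : ∀ π ∈ F, π ≠ 1 → ∀ i : Fin d, π i ≠ i)
    (T : SimpleGraph V) (hT : T.IsTree) (C : LegalColoring T d)
    (H : Subgroup (Equiv.Perm V)) (hH : (H : Set (Equiv.Perm V)) ⊆ GFFSet T C F F')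
    (hfg : H.FG)
    (A B : Type*) [Group A] [Group B] [Nontrivial A] [Nontrivial B]
    (e : H ≃* A × B) : Finite H :=
  GFF_fg_direct_product_finite_general hfree hT (hH.trans Set.inter_subset_left) hfg e
end

section
/- Let d ≥ 3, Ω = {1,…,d}, and let F ≤ F' ≤ Sym(Ω) be permutation groups such that every element of F' maps each F-orbit onto itself, and assume that F' does NOT act 2-transitively on Ω. Let T be a legally colored d-regular tree. Then the quotient of the real vector space of homogeneous quasimorphisms of the group G(F,F') by the subspace of group homomorphisms G(F,F') → ℝ is infinite-dimensional; equivalently, there exists an infinite family (φ_k) of homogeneous quasimorphisms G(F,F') → ℝ such that no nontrivial finite real linear combination of the φ_k is a group homomorphism. -/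
/-! Since `F'` is not 2-transitive, it preserves a relation on the set of colors which
distinguishes two kinds of pairs of colors. Recording which of them are consecutive edge colors
along a geodesic turns the geodesic into a word over a two-letter alphabet, and this word only
depends on the orbit of the geodesic under `U(F')`. Counting the occurrences of a fixed pattern in
the words of the geodesics from `v₀` to `g v₀`, minus those in the words of the reversed
geodesics, gives a quasimorphism, as for the Brooks quasimorphisms of free groups.

The color-preserving automorphisms of the tree belong to `G(F, F')`. They act simply transitively
on the vertices and are generated by involutions, so every homomorphism to `ℝ` vanishes on them.
It thus suffices to find, for each pattern of an infinite family, reduced color words in which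
this pattern occurs arbitrarily often, whereas it does not occur backwards and no other pattern of
the family occurs in either direction. The patterns and words encode sequences of natural numbers
by runs of one letter, and a periodic sequence of distinct numbers `a, b, 1, a, b, 1, …` differs
from its reversal.
-/

section Quasimorphism

open Filter Topology

variable {G : Type*} [Group G] {f : G → ℝ} {D : ℝ}

/-- `f` is a quasimorphism of defect at most `D`. -/
def IsQuasimorphism (f : G → ℝ) (D : ℝ) : Prop :=
  ∀ a b : G, |f (a * b) - f a - f b| ≤ D

/-- The homogenization `g ↦ lim f (g ^ n) / n` of a quasimorphism `f`. -/
noncomputable def homogenization (f : G → ℝ) (g : G) : ℝ :=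
  limUnder atTop fun n : ℕ => f (g ^ n) / n

namespace IsQuasimorphism

theorem nonneg (hf : IsQuasimorphism f D) : 0 ≤ D :=
  (abs_nonneg _).trans (hf 1 1)

theorem abs_map_pow_succ_sub_le (hf : IsQuasimorphism f D) (g : G) (n : ℕ) :
    |f (g ^ (n + 1)) - (n + 1) * f g| ≤ n * D := by
  induction n with
  | zero => simp
  | succ n ih =>
    have h := hf (g ^ (n + 1)) g
    rw [← pow_succ] at h
    push_cast
    rw [abs_le] at h ih ⊢
    constructor <;> linarith

theorem abs_map_pow_div_sub_le (hf : IsQuasimorphism f D) (g : G) {n : ℕ} (hn : n ≠ 0) :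
    |f (g ^ n) / n - f g| ≤ D := by
  obtain ⟨n, rfl⟩ := Nat.exists_eq_succ_of_ne_zero hn
  have hpos : (0 : ℝ) < n + 1 := by positivity
  have h := hf.abs_map_pow_succ_sub_le g n
  push_cast
  rw [div_sub' hpos.ne', abs_div, abs_of_pos hpos, div_le_iff₀ hpos]
  linarith [hf.nonneg]

theorem tendsto_homogenization (hf : IsQuasimorphism f D) (g : G) :
    Tendsto (fun n : ℕ => f (g ^ n) / n) atTop (𝓝 (homogenization f g)) := by
  have hsub : Subadditive fun n : ℕ => f (g ^ n) + D := by
    intro m n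
    have h := (abs_le.1 (hf (g ^ m) (g ^ n))).2
    simp only [pow_add]
    linarith
  have hbdd : BddBelow (Set.range fun n : ℕ => (f (g ^ n) + D) / n) := by
    refine ⟨-|f g| - D, ?_⟩
    rintro _ ⟨n, rfl⟩
    rcases eq_or_ne n 0 with rfl | hn
    · simp only [Nat.cast_zero, div_zero]
      linarith [abs_nonneg (f g), hf.nonneg]
    · have h := (abs_le.1 (hf.abs_map_pow_div_sub_le g hn)).1
      have hD : 0 ≤ D / n := div_nonneg hf.nonneg n.cast_nonneg
      simp only [add_div]
      linarith [neg_abs_le (f g)]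
  have hzero : Tendsto (fun n : ℕ => D / (n : ℝ)) atTop (𝓝 0) :=
    tendsto_const_div_atTop_nhds_zero_nat D
  refine tendsto_nhds_limUnder ⟨hsub.lim, ?_⟩
  simpa [add_div] using (hsub.tendsto_lim hbdd).sub hzero

theorem abs_homogenization_sub_le (hf : IsQuasimorphism f D) (g : G) :
    |homogenization f g - f g| ≤ D :=
  le_of_tendsto ((hf.tendsto_homogenization g).sub_const (f g)).abs
    ((eventually_ne_atTop 0).mono fun _ hn => hf.abs_map_pow_div_sub_le g hn)

theorem isQuasimorphism_homogenization (hf : IsQuasimorphism f D) :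
    IsQuasimorphism (homogenization f) (4 * D) := by
  intro a b
  have hab := hf.abs_homogenization_sub_le (a * b)
  have ha := hf.abs_homogenization_sub_le a
  have hb := hf.abs_homogenization_sub_le b
  have h := hf a b
  rw [abs_le] at *
  constructor <;> linarith

theorem homogenization_pow (hf : IsQuasimorphism f D) (g : G) (n : ℕ) :
    homogenization f (g ^ n) = n * homogenization f g := by
  rcases eq_or_ne n 0 with rfl | hn
  · have h := (hf.tendsto_homogenization 1).congr fun m => by rw [one_pow]
    simpa using tendsto_nhds_unique h (tendsto_const_div_atTop_nhds_zero_nat (f 1))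
  · have hmul : Tendsto (n * ·) atTop atTop := tendsto_id.const_mul_atTop' (Nat.pos_of_ne_zero hn)
    refine tendsto_nhds_unique (hf.tendsto_homogenization _)
      ((((hf.tendsto_homogenization g).comp hmul).const_mul (n : ℝ)).congr fun m => ?_)
    have hn' : (n : ℝ) ≠ 0 := Nat.cast_ne_zero.2 hn
    rw [Function.comp_apply, pow_mul, Nat.cast_mul, ← mul_div_assoc, mul_div_mul_left _ _ hn']

theorem homogenization_inv (hf : IsQuasimorphism f D) (g : G) :
    homogenization f g⁻¹ = -homogenization f g := by
  have hsum := (hf.tendsto_homogenization g⁻¹).add (hf.tendsto_homogenization g)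
  refine eq_neg_of_add_eq_zero_left (tendsto_nhds_unique hsum (squeeze_zero_norm (fun n => ?_)
    (tendsto_const_div_atTop_nhds_zero_nat (D + |f 1|))))
  have h := hf (g⁻¹ ^ n) (g ^ n)
  rw [inv_pow, inv_mul_cancel, sub_sub, ← inv_pow] at h
  rw [← add_div, Real.norm_eq_abs, abs_div, Nat.abs_cast]
  gcongr
  linarith [abs_sub_abs_le_abs_sub (f (g⁻¹ ^ n) + f (g ^ n)) (f 1),
    abs_sub_comm (f 1) (f (g⁻¹ ^ n) + f (g ^ n))]

theorem homogenization_zpow (hf : IsQuasimorphism f D) (g : G) (n : ℤ) :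
    homogenization f (g ^ n) = n * homogenization f g := by
  obtain ⟨m, rfl | rfl⟩ := n.eq_nat_or_neg
  · simpa using hf.homogenization_pow g m
  · simp [hf.homogenization_inv, hf.homogenization_pow]

end IsQuasimorphism

theorem map_eq_zero_of_mem_closure_involutions {ψ : G → ℝ} (hψ : ∀ a b, ψ (a * b) = ψ a + ψ b)
    {g : G} (hg : g ∈ Subgroup.closure {s : G | s * s = 1}) : ψ g = 0 := by
  have hone : ψ 1 = 0 := by simpa using hψ 1 1
  induction hg using Subgroup.closure_induction with
  | mem s hs =>
    have h := hψ s s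
    rw [hs, hone] at h
    linarith
  | one => exact hone
  | mul a b _ _ ha hb => rw [hψ, ha, hb, add_zero]
  | inv a _ ha => simpa [hone, ha] using (hψ a a⁻¹).symm

theorem abs_sum_mul_le_of_sum_mul_homogenization_eq_zero {ι : Type*} {f : ι → G → ℝ} {D : ι → ℝ}
    (hf : ∀ k, IsQuasimorphism (f k) (D k)) (c : ι →₀ ℝ) {g : G}
    (hg : (c.sum fun k ck => ck * homogenization (f k) g) = 0) :
    |c.sum fun k ck => ck * f k g| ≤ c.sum fun k ck => |ck| * D k := by
  calc |c.sum fun k ck => ck * f k g|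
      = |c.sum fun k ck => ck * (homogenization (f k) g - f k g)| := by
        simp only [mul_sub, Finsupp.sum_sub, hg, zero_sub, abs_neg]
    _ ≤ c.sum fun k ck => |ck * (homogenization (f k) g - f k g)| :=
        Finset.abs_sum_le_sum_abs _ _
    _ ≤ c.sum fun k ck => |ck| * D k := by
        refine Finset.sum_le_sum fun k _ => ?_
        simp only [abs_mul]
        exact mul_le_mul_of_nonneg_left ((hf k).abs_homogenization_sub_le g) (abs_nonneg _)

theorem eq_zero_of_sum_mul_homogenization_map_mul {ι : Type*} {f : ι → G → ℝ} {D : ι → ℝ}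
    (hf : ∀ k, IsQuasimorphism (f k) (D k))
    (hunbounded : ∀ (k : ι) (K : ℕ), ∃ g ∈ Subgroup.closure {s : G | s * s = 1},
      K ≤ f k g ∧ ∀ j, j ≠ k → f j g = 0)
    (c : ι →₀ ℝ)
    (hc : ∀ a b : G, (c.sum fun k ck => ck * homogenization (f k) (a * b)) =
      (c.sum fun k ck => ck * homogenization (f k) a) +
        c.sum fun k ck => ck * homogenization (f k) b) :
    c = 0 := by
  ext k
  by_contra hk
  obtain ⟨K, hK⟩ := exists_nat_gt ((c.sum fun j cj => |cj| * D j) / |c k|)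
  obtain ⟨g, hg, hgk, hgj⟩ := hunbounded k K
  have hsum : (c.sum fun j cj => cj * f j g) = c k * f k g :=
    Finsupp.sum_eq_single k (fun j _ hj => by rw [hgj j hj, mul_zero]) fun _ => zero_mul _
  have hbound := abs_sum_mul_le_of_sum_mul_homogenization_eq_zero hf c
    (map_eq_zero_of_mem_closure_involutions
      (ψ := fun g => c.sum fun j cj => cj * homogenization (f j) g) hc hg)
  rw [hsum, abs_mul, mul_comm, ← le_div_iff₀ (abs_pos.2 hk)] at hbound
  linarith [le_abs_self (f k g)]

end Quasimorphism

section Counting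

open List

variable {α β : Type*}

/-- The number of positions at which the pattern `w` occurs in `l` as a contiguous sublist. An
empty pattern occurs at all `l.length + 1` positions. -/
def occurrences [DecidableEq α] (w l : List α) : ℕ :=
  l.tails.countP (w <+: ·)

section Occurrences

variable [DecidableEq α] {w : List α}

theorem occurrences_nil (hw : w ≠ []) : occurrences w [] = 0 := by
  simp [occurrences, hw]

theorem occurrences_cons (w : List α) (a : α) (l : List α) :
    occurrences w (a :: l) = occurrences w l + if w <+: a :: l then 1 else 0 := by
  simp [occurrences, countP_cons]

theorem occurrences_le_length (hw : w ≠ []) (l : List α) : occurrences w l ≤ l.length := by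
  induction l with
  | nil => simp [occurrences_nil hw]
  | cons a l ih =>
    rw [occurrences_cons, length_cons]
    split_ifs <;> omega

theorem occurrences_eq_zero (hw : w ≠ []) {l : List α} (h : ¬ w <:+: l) :
    occurrences w l = 0 := by
  induction l with
  | nil => exact occurrences_nil hw
  | cons a l ih =>
    rw [infix_cons_iff, not_or] at h
    rw [occurrences_cons, ih h.2, if_neg h.1]

theorem occurrences_add_le_occurrences_append (hw : w ≠ []) (l₁ l₂ : List α) :
    occurrences w l₁ + occurrences w l₂ ≤ occurrences w (l₁ ++ l₂) := by
  induction l₁ with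
  | nil => simp [occurrences_nil hw]
  | cons a l₁ ih =>
    have hmono : w <+: a :: l₁ → w <+: a :: (l₁ ++ l₂) := fun h =>
      h.trans (prefix_append (a :: l₁) l₂)
    rw [cons_append, occurrences_cons, occurrences_cons]
    split_ifs <;> grind

/-- An occurrence that is lost on cutting `l₁ ++ l₂` starts among the last `w.length` letters
of `l₁`. -/
theorem occurrences_append_le (hw : w ≠ []) (l₁ l₂ : List α) :
    occurrences w (l₁ ++ l₂) ≤
      occurrences w l₁ + occurrences w l₂ + min l₁.length w.length := by
  induction l₁ with
  | nil => simp [occurrences_nil hw]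
  | cons a l₁ ih =>
    have hcut : w <+: a :: (l₁ ++ l₂) → w.length ≤ l₁.length + 1 → w <+: a :: l₁ := fun h hlen =>
      prefix_of_prefix_length_le h (prefix_append (a :: l₁) l₂) (by simpa using hlen)
    rw [cons_append, occurrences_cons, occurrences_cons, length_cons]
    split_ifs <;> grind

theorem abs_occurrences_append_sub_le (hw : w ≠ []) (l₁ l₂ : List α) :
    |(occurrences w (l₁ ++ l₂) : ℝ) - occurrences w l₁ - occurrences w l₂| ≤ w.length := by
  have hge := occurrences_add_le_occurrences_append hw l₁ l₂
  have hle := (occurrences_append_le hw l₁ l₂).trans (Nat.add_le_add_left (min_le_right _ _) _)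
  rify at hge hle
  rw [abs_le]
  constructor <;> linarith

theorem occurrences_le_of_suffix (hw : w ≠ []) {l₁ l₂ : List α} (h : l₁ <:+ l₂) :
    occurrences w l₁ ≤ occurrences w l₂ := by
  obtain ⟨l, rfl⟩ := h
  exact le_of_add_le_right (occurrences_add_le_occurrences_append hw l l₁)

end Occurrences

/-- The labels `R i j` of the pairs of consecutive entries `i, j` of a list. -/
def stepLabels (R : α → α → β) (l : List α) : List β :=
  zipWith R l l.tail

section StepLabels

variable {R : α → α → β}

@[simp]
theorem stepLabels_nil : stepLabels R [] = [] := rfl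

@[simp]
theorem stepLabels_singleton (i : α) : stepLabels R [i] = [] := rfl

@[simp]
theorem stepLabels_cons_cons (i j : α) (l : List α) :
    stepLabels R (i :: j :: l) = R i j :: stepLabels R (j :: l) := rfl

theorem exists_stepLabels_append (R : α → α → β) (l₁ l₂ : List α) : ∃ m : List β, m.length ≤ 1 ∧
    stepLabels R (l₁ ++ l₂) = stepLabels R l₁ ++ (m ++ stepLabels R l₂) := by
  induction l₁ with
  | nil => exact ⟨[], by simp⟩
  | cons i l₁ ih =>
    rcases l₁ with - | ⟨j, l₁⟩
    · rcases l₂ with - | ⟨j, l₂⟩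
      · exact ⟨[], by simp⟩
      · exact ⟨[R i j], by simp⟩
    · obtain ⟨m, hm, h⟩ := ih
      exact ⟨m, hm, by simpa using h⟩

theorem stepLabels_reverse (l : List α) :
    stepLabels R l.reverse = (stepLabels (flip R) l).reverse := by
  have hdrop (S : α → α → β) (l : List α) : zipWith S l l.tail = zipWith S l.dropLast l.tail := by
    induction l with
    | nil => rfl
    | cons i l ih => cases l <;> simp_all
  rw [stepLabels, stepLabels, hdrop, hdrop, tail_reverse, dropLast_reverse,
    ← reverse_zipWith (by simp), zipWith_comm]
  rfl

theorem stepLabels_flip {σ : β → β} {l : List α} (h : l.IsChain fun i j => R j i = σ (R i j)) :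
    stepLabels (flip R) l = (stepLabels R l).map σ := by
  induction l with
  | nil => rfl
  | cons i l ih =>
    rcases l with - | ⟨j, l⟩
    · rfl
    · rw [isChain_cons_cons] at h
      simp [ih h.2, h.1, flip]

end StepLabels

section SignedOccurrences

variable [DecidableEq β] {w : List β}

/-- The number of occurrences of the pattern `w` in the step labels of a word minus the number
of its occurrences in the step labels of the reversed word (a Brooks counting function). -/
def signedOccurrences (R : α → α → β) (w : List β) (l : List α) : ℝ :=
  occurrences w (stepLabels R l) - occurrences w (stepLabels R l.reverse)

theorem signedOccurrences_reverse (R : α → α → β) (w : List β) (l : List α) :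
    signedOccurrences R w l.reverse = -signedOccurrences R w l := by
  simp [signedOccurrences]

theorem abs_occurrences_stepLabels_append_sub_le (R : α → α → β) (hw : w ≠ []) (l₁ l₂ : List α) :
    |(occurrences w (stepLabels R (l₁ ++ l₂)) : ℝ) - occurrences w (stepLabels R l₁) -
      occurrences w (stepLabels R l₂)| ≤ 2 * w.length + 1 := by
  obtain ⟨m, hm, h⟩ := exists_stepLabels_append R l₁ l₂
  have hleft := abs_occurrences_append_sub_le hw (stepLabels R l₁) (m ++ stepLabels R l₂)
  have hright := abs_occurrences_append_sub_le hw m (stepLabels R l₂)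
  have hmid : (occurrences w m : ℝ) ≤ 1 := mod_cast (occurrences_le_length hw m).trans hm
  have hmid_nonneg : (0 : ℝ) ≤ occurrences w m := Nat.cast_nonneg _
  rw [h]
  rw [abs_le] at hleft hright ⊢
  constructor <;> linarith

theorem abs_signedOccurrences_append_sub_le (R : α → α → β) (hw : w ≠ []) (l₁ l₂ : List α) :
    |signedOccurrences R w (l₁ ++ l₂) - signedOccurrences R w l₁ - signedOccurrences R w l₂| ≤
      4 * w.length + 2 := by
  have hfwd := abs_occurrences_stepLabels_append_sub_le R hw l₁ l₂
  have hbwd := abs_occurrences_stepLabels_append_sub_le R hw l₂.reverse l₁.reverse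
  simp only [signedOccurrences, reverse_append]
  rw [abs_le] at hfwd hbwd ⊢
  constructor <;> linarith

end SignedOccurrences

theorem exists_cancellation {u v : List α} (hu : u.IsChain (· ≠ ·)) (hv : v.IsChain (· ≠ ·)) :
    ∃ a s b : List α, u = a ++ s ∧ v = s.reverse ++ b ∧ (a ++ b).IsChain (· ≠ ·) := by
  induction u using reverseRecOn generalizing v with
  | nil => exact ⟨[], [], v, by simpa using hv⟩
  | append_singleton u i ih =>
    rcases v with - | ⟨j, v⟩
    · exact ⟨u ++ [i], [], [], by simpa using hu⟩
    · rcases eq_or_ne i j with rfl | hij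
      · obtain ⟨a, s, b, rfl, rfl, h⟩ := ih hu.left_of_append hv.tail
        exact ⟨a, s ++ [i], b, by simp, by simp, h⟩
      · exact ⟨u ++ [i], [], j :: v, by simp, by simp, hu.append hv (by simpa using hij)⟩

end Counting

section GapWords

open List

/-- The word over `{false, true}` which encodes the sequence of numbers `n₁, n₂, …` as runs of `nᵢ`
letters `false` (the gaps) separated and enclosed by pairs `true, true`. -/
def gapWord : List ℕ → List Bool
  | [] => [true, true]
  | n :: ns => true :: true :: (replicate n false ++ gapWord ns)

theorem exists_gapWord_eq_cons_cons (ns : List ℕ) : ∃ l, gapWord ns = true :: true :: l := by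
  rcases ns with - | ⟨n, ns⟩
  · exact ⟨_, rfl⟩
  · exact ⟨_, rfl⟩

theorem gapWord_ne_nil (ns : List ℕ) : gapWord ns ≠ [] := by
  obtain ⟨l, h⟩ := exists_gapWord_eq_cons_cons ns
  simp [h]

theorem gapWord_append_singleton (ns : List ℕ) (n : ℕ) :
    gapWord (ns ++ [n]) = gapWord ns ++ (replicate n false ++ [true, true]) := by
  induction ns with
  | nil => rfl
  | cons m ns ih => simp [gapWord, ih]

theorem gapWord_reverse (ns : List ℕ) : gapWord ns.reverse = (gapWord ns).reverse := by
  induction ns with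
  | nil => rfl
  | cons n ns ih => simp [gapWord, gapWord_append_singleton, ih]

theorem gapWord_prefix_gapWord_append (ms ns : List ℕ) : gapWord ms <+: gapWord (ms ++ ns) := by
  induction ms with
  | nil =>
    obtain ⟨l, h⟩ := exists_gapWord_eq_cons_cons ns
    simp [gapWord, h]
  | cons m ms ih => simpa [gapWord, prefix_append_right_inj] using ih

theorem gapWord_suffix_gapWord_append (ms ns : List ℕ) : gapWord ns <:+ gapWord (ms ++ ns) := by
  rw [← reverse_prefix, ← gapWord_reverse, ← gapWord_reverse, reverse_append]
  exact gapWord_prefix_gapWord_append _ _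

theorem of_replicate_append_gapWord_prefix {m n : ℕ} {ms ns : List ℕ}
    (h : replicate m false ++ gapWord ms <+: replicate n false ++ gapWord ns) :
    m = n ∧ gapWord ms <+: gapWord ns := by
  obtain ⟨x, hx⟩ := exists_gapWord_eq_cons_cons ms
  obtain ⟨y, hy⟩ := exists_gapWord_eq_cons_cons ns
  induction m generalizing n with
  | zero => rcases n with - | n <;> simp_all [replicate_succ]
  | succ m ih =>
    rcases n with - | n
    · simp [hy, replicate_succ] at h
    · simp only [replicate_succ, cons_append, cons_prefix_cons, true_and] at h
      simpa using ih h

theorem prefix_of_gapWord_prefix {ms ns : List ℕ} (h : gapWord ms <+: gapWord ns) : ms <+: ns := by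
  induction ms generalizing ns with
  | nil => exact nil_prefix
  | cons m ms ih =>
    rcases ns with - | ⟨n, ns⟩
    · simp [gapWord, gapWord_ne_nil] at h
    · simp only [gapWord, cons_prefix_cons, true_and] at h
      obtain ⟨rfl, hgap⟩ := of_replicate_append_gapWord_prefix h
      simpa using ih hgap

theorem true_cons_infix_of_infix_replicate_append {n : ℕ} {x l : List Bool}
    (h : true :: x <:+: replicate n false ++ l) : true :: x <:+: l := by
  induction n with
  | zero => simpa using h
  | succ n ih =>
    rw [replicate_succ, cons_append, infix_cons_iff] at h
    exact ih (h.resolve_left (by simp))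

theorem infix_of_gapWord_infix {ms ns : List ℕ} (hns : 0 ∉ ns) (h : gapWord ms <:+: gapWord ns) :
    ms <:+: ns := by
  induction ns with
  | nil =>
    have hlen : (gapWord []).length ≤ (gapWord ms).length :=
      (gapWord_prefix_gapWord_append [] ms).length_le
    exact (prefix_of_gapWord_prefix (h.eq_of_length_le hlen ▸ prefix_rfl)).isInfix
  | cons n ns ih =>
    rw [mem_cons, not_or] at hns
    obtain ⟨hn, hns⟩ := hns
    obtain ⟨n, rfl⟩ := Nat.exists_eq_succ_of_ne_zero (Ne.symm hn)
    obtain ⟨l, hl⟩ := exists_gapWord_eq_cons_cons ms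
    rw [gapWord, infix_cons_iff, infix_cons_iff] at h
    rcases h with h | h | h
    · exact (prefix_of_gapWord_prefix (ns := (n + 1) :: ns) h).isInfix
    · simp [hl, replicate_succ] at h
    · rw [hl] at h
      exact infix_cons (ih hns (hl ▸ true_cons_infix_of_infix_replicate_append h))

theorem not_true_true_true_infix_gapWord {ns : List ℕ} (hns : 0 ∉ ns) :
    ¬ [true, true, true] <:+: gapWord ns := by
  induction ns with
  | nil => exact fun h => absurd h.length_le (by simp [gapWord])
  | cons n ns ih =>
    rw [mem_cons, not_or] at hns
    obtain ⟨hn, hns⟩ := hns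
    obtain ⟨n, rfl⟩ := Nat.exists_eq_succ_of_ne_zero (Ne.symm hn)
    rw [gapWord, infix_cons_iff, infix_cons_iff]
    rintro (h | h | h)
    · simp [replicate_succ] at h
    · simp [replicate_succ] at h
    · exact ih hns (true_cons_infix_of_infix_replicate_append h)

/-- The periodic sequence of gaps `k + 3, 2, 1, k + 3, 2, 1, …` with `K` periods. The three numbers
of a period are distinct, so that `k + 3, 2` does not occur in the reversed sequence. -/
def periodicGaps (k K : ℕ) : List ℕ :=
  (replicate K [k + 3, 2, 1]).flatten

theorem zero_notMem_periodicGaps (k K : ℕ) : 0 ∉ periodicGaps k K := by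
  simp [periodicGaps]

theorem isChain_periodicGaps (k K : ℕ) : (periodicGaps k K).IsChain fun x y =>
    (x = k + 3 ∧ y = 2) ∨ (x = 2 ∧ y = 1) ∨ (x = 1 ∧ y = k + 3) := by
  rw [periodicGaps, isChain_flatten (by simp)]
  refine ⟨by simp, isChain_replicate_of_rel _ (by simp)⟩

theorem le_occurrences_gapWord_periodicGaps (k K : ℕ) :
    K ≤ occurrences (gapWord [k + 3, 2]) (gapWord (periodicGaps k K)) := by
  induction K with
  | zero => exact Nat.zero_le _
  | succ K ih =>
    set l := true :: (replicate (k + 3) false ++ gapWord ([2, 1] ++ periodicGaps k K))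
    have hprefix : gapWord [k + 3, 2] <+: true :: l :=
      gapWord_prefix_gapWord_append [k + 3, 2] (1 :: periodicGaps k K)
    have hsuffix : gapWord (periodicGaps k K) <:+ l :=
      (gapWord_suffix_gapWord_append [2, 1] _).trans
        ((suffix_append _ _).trans (suffix_cons _ _))
    calc
      K + 1 ≤ occurrences (gapWord [k + 3, 2]) l + 1 :=
        Nat.add_le_add_right (ih.trans (occurrences_le_of_suffix (gapWord_ne_nil _) hsuffix)) 1
      _ = occurrences (gapWord [k + 3, 2]) (true :: l) := by
        rw [occurrences_cons _ true l, if_pos hprefix]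

theorem gapWord_not_infix_gapWord_periodicGaps {j k : ℕ} (hjk : j ≠ k) (K : ℕ) :
    ¬ gapWord [j + 3, 2] <:+: gapWord (periodicGaps k K) := fun h => by
  have hpair := (isChain_periodicGaps k K).infix
    (infix_of_gapWord_infix (zero_notMem_periodicGaps k K) h)
  simp at hpair
  omega

theorem gapWord_not_infix_reverse_map_gapWord_periodicGaps (j k K : ℕ) (ε : Bool) :
    ¬ gapWord [j + 3, 2] <:+: ((gapWord (periodicGaps k K)).map (· ^^ ε)).reverse := by
  have hzero := zero_notMem_periodicGaps k K
  intro h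
  cases ε with
  | false =>
    rw [← reverse_infix, reverse_reverse, ← gapWord_reverse] at h
    simp only [Bool.xor_false, map_id'] at h
    have hpair := (isChain_periodicGaps k K).infix (infix_of_gapWord_infix hzero h)
    simp at hpair
  | true =>
    have hgap : [false, false, false] <:+: gapWord [j + 3, 2] :=
      ⟨[true, true], replicate j false ++ gapWord [2], by simp [gapWord, replicate_succ]⟩
    have hcompl := (reverse_infix.2 (hgap.trans h)).map (!·)
    simp only [reverse_reverse, map_map, Function.comp_def, Bool.xor_true, Bool.not_not,
      map_id'] at hcompl
    exact not_true_true_true_infix_gapWord hzero hcompl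

end GapWords

section RealizesGaps

open List

variable {α : Type*}

/-- A step from `i` to `j ≠ i` whose label `R i j` is kept (`ε = false`) or complemented
(`ε = true`) on reversing the step. -/
def IsReversibleStep (R : α → α → Bool) (ε : Bool) (i j : α) : Prop :=
  i ≠ j ∧ R j i = (R i j ^^ ε)

/-- From each point of the nonempty set `A` one can return to `A` by one reversible step labelled
`false`, and by two reversible steps labelled `true`. The second kind of return may pass through a
point outside `A`. -/
structure RealizesGaps (R : α → α → Bool) (ε : Bool) (A : Set α) : Prop where
  nonempty : A.Nonempty
  exists_false : ∀ i ∈ A, ∃ j ∈ A, IsReversibleStep R ε i j ∧ R i j = false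
  exists_true_true : ∀ i ∈ A, ∃ k, ∃ j ∈ A, (IsReversibleStep R ε i k ∧ R i k = true) ∧
    IsReversibleStep R ε k j ∧ R k j = true

namespace RealizesGaps

variable {R : α → α → Bool} {ε : Bool} {A : Set α}

theorem exists_stepLabels_eq_replicate_append (h : RealizesGaps R ε A) {w : List Bool}
    (hw : ∀ i ∈ A, ∃ l, (i :: l).IsChain (IsReversibleStep R ε) ∧ stepLabels R (i :: l) = w)
    (n : ℕ) {i : α} (hi : i ∈ A) : ∃ l, (i :: l).IsChain (IsReversibleStep R ε) ∧
      stepLabels R (i :: l) = replicate n false ++ w := by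
  induction n generalizing i with
  | zero => exact hw i hi
  | succ n ih =>
    obtain ⟨j, hj, hij, hlabel⟩ := h.exists_false i hi
    obtain ⟨l, hl, hlabels⟩ := ih hj
    exact ⟨j :: l, hl.cons_cons hij, by simp [hlabel, hlabels, replicate_succ]⟩

theorem exists_stepLabels_eq_gapWord (h : RealizesGaps R ε A) (ns : List ℕ) {i : α} (hi : i ∈ A) :
    ∃ l, (i :: l).IsChain (IsReversibleStep R ε) ∧ stepLabels R (i :: l) = gapWord ns := by
  induction ns generalizing i with
  | nil =>
    obtain ⟨k, j, -, ⟨hik, hik'⟩, hkj, hkj'⟩ := h.exists_true_true i hi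
    exact ⟨[k, j], by simp [hik, hkj], by simp [hik', hkj', gapWord]⟩
  | cons n ns ih =>
    obtain ⟨k, j, hj, ⟨hik, hik'⟩, hkj, hkj'⟩ := h.exists_true_true i hi
    obtain ⟨l, hl, hlabels⟩ := h.exists_stepLabels_eq_replicate_append (fun i hi => ih hi) n hj
    exact ⟨k :: j :: l, (hl.cons_cons hkj).cons_cons hik, by simp [hik', hkj', hlabels, gapWord]⟩

theorem exists_signedOccurrences_ge (h : RealizesGaps R ε A) (k K : ℕ) :
    ∃ u : List α, u.IsChain (· ≠ ·) ∧ K ≤ signedOccurrences R (gapWord [k + 3, 2]) u ∧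
      ∀ j, j ≠ k → signedOccurrences R (gapWord [j + 3, 2]) u = 0 := by
  obtain ⟨i, hi⟩ := h.nonempty
  obtain ⟨l, hl, hlabels⟩ := h.exists_stepLabels_eq_gapWord (periodicGaps k K) hi
  have hreverse (j : ℕ) :
      occurrences (gapWord [j + 3, 2]) (stepLabels R (i :: l).reverse) = 0 := by
    rw [stepLabels_reverse, stepLabels_flip (σ := (· ^^ ε)) (hl.imp fun _ _ h => h.2),
      hlabels]
    exact occurrences_eq_zero (gapWord_ne_nil _)
      (gapWord_not_infix_reverse_map_gapWord_periodicGaps j k K ε)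
  refine ⟨i :: l, hl.imp fun _ _ h => h.1, ?_, fun j hj => ?_⟩
  · rw [signedOccurrences, hreverse, hlabels, Nat.cast_zero, sub_zero, Nat.cast_le]
    exact le_occurrences_gapWord_periodicGaps k K
  · rw [signedOccurrences, hreverse, hlabels, occurrences_eq_zero (gapWord_ne_nil _)
      (gapWord_not_infix_gapWord_periodicGaps hj K), sub_self]

end RealizesGaps

end RealizesGaps

section NotTwoTransitive

open MulAction

variable {G α : Type*} [Group G] [MulAction G α]

theorem IsReversibleStep.realizesGaps_univ [IsPretransitive G α] {R : α → α → Bool} {ε : Bool}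
    (hR : ∀ (g : G) (i j : α), R (g • i) (g • j) = R i j) {a b i j : α}
    (hab : IsReversibleStep R ε a b) (hab_false : R a b = false)
    (hij : IsReversibleStep R ε i j) (hij_true : R i j = true) :
    RealizesGaps R ε Set.univ := by
  have move {x y : α} (hxy : IsReversibleStep R ε x y) (p : α) :
      ∃ q, IsReversibleStep R ε p q ∧ R p q = R x y := by
    obtain ⟨g, rfl⟩ := exists_smul_eq G x p
    exact ⟨g • y, ⟨(MulAction.injective g).ne hxy.1, by rw [hR, hR, hxy.2]⟩, hR g x y⟩
  refine ⟨⟨a, trivial⟩, fun p _ => ?_, fun p _ => ?_⟩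
  · obtain ⟨q, hpq, hlabel⟩ := move hab p
    exact ⟨q, trivial, hpq, hlabel.trans hab_false⟩
  · obtain ⟨q, hpq, hpq'⟩ := move hij p
    obtain ⟨r, hqr, hqr'⟩ := move hij q
    exact ⟨q, r, trivial, ⟨hpq, hpq'.trans hij_true⟩, hqr, hqr'.trans hij_true⟩

theorem exists_realizesGaps_of_isPretransitive [IsPretransitive G α]
    (h : ¬ IsMultiplyPretransitive G α 2) :
    ∃ (R : α → α → Bool) (ε : Bool) (A : Set α),
      (∀ (g : G) (i j : α), R (g • i) (g • j) = R i j) ∧ RealizesGaps R ε A := by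
  classical
  simp only [is_two_pretransitive_iff, not_forall] at h
  obtain ⟨i, j, k, l, hij, hkl, hne⟩ := h
  set R : α → α → Bool := fun p q => decide ((p, q) ∈ orbit G (i, j)) with hR_def
  have hR (g : G) (p q : α) : R (g • p) (g • q) = R p q := by
    simp only [hR_def, ← Prod.smul_mk, ← orbit_eq_iff, orbit_smul]
  have hRij : R i j = true := by simp [hR_def]
  by_cases hRji : R j i = true
  · have hsymm (p q : α) : R q p = R p q := by
      have hswap (i j : α) : (q, p) ∈ orbit G (j, i) ↔ (p, q) ∈ orbit G (i, j) := by
        simp [mem_orbit_iff, and_comm]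
      have horbit : orbit G (j, i) = orbit G (i, j) := orbit_eq_iff.2 (of_decide_eq_true hRji)
      simp only [hR_def, ← hswap i j, horbit]
    have hRkl : R k l = false := by
      simpa [hR_def, mem_orbit_iff] using hne
    exact ⟨R, false, Set.univ, hR, IsReversibleStep.realizesGaps_univ hR
      ⟨hkl, by simp [hsymm k l]⟩ hRkl ⟨hij, by simp [hsymm i j]⟩ hRij⟩
  · rw [Bool.not_eq_true] at hRji
    exact ⟨R, true, Set.univ, hR, IsReversibleStep.realizesGaps_univ hR
      ⟨hij.symm, by simp [hRij, hRji]⟩ hRji ⟨hij, by simp [hRij, hRji]⟩ hRij⟩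

theorem exists_invariant_nontrivial_ne_univ (hcard : 3 ≤ ENat.card α)
    (h : ¬ IsPretransitive G α) :
    ∃ A : Set α, (∀ (g : G) (x : α), g • x ∈ A ↔ x ∈ A) ∧ A.Nontrivial ∧ ∃ y, y ∉ A := by
  simp only [isPretransitive_iff, not_forall] at h
  obtain ⟨x, y, hxy⟩ := h
  have hy : y ∉ orbit G x := hxy
  have hinv (g : G) (z : α) : g • z ∈ orbit G x ↔ z ∈ orbit G x := by
    rw [← orbit_eq_iff, orbit_smul, orbit_eq_iff]
  obtain ⟨z, hzx, hzy⟩ := ENat.exists_ne_ne_of_three_le hcard x y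
  by_cases hz : z ∈ orbit G x
  · exact ⟨orbit G x, hinv, ⟨z, hz, x, mem_orbit_self x, hzx⟩, y, hy⟩
  · exact ⟨(orbit G x)ᶜ, fun g w => not_congr (hinv g w), ⟨z, hz, y, hy, hzy⟩, x,
      not_not_intro (mem_orbit_self x)⟩

theorem exists_realizesGaps_of_not_isPretransitive (hcard : 3 ≤ ENat.card α)
    (h : ¬ IsPretransitive G α) :
    ∃ (R : α → α → Bool) (ε : Bool) (A : Set α),
      (∀ (g : G) (i j : α), R (g • i) (g • j) = R i j) ∧ RealizesGaps R ε A := by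
  classical
  obtain ⟨A, hA, hnontrivial, y, hy⟩ := exists_invariant_nontrivial_ne_univ hcard h
  refine ⟨fun i j => decide ¬(i ∈ A ∧ j ∈ A), false, A, fun g i j => by simp only [hA],
    hnontrivial.nonempty, fun i hi => ?_, fun i hi => ?_⟩
  · obtain ⟨j, hj, hji⟩ := hnontrivial.exists_ne i
    exact ⟨j, hj, ⟨hji.symm, by simp [hi, hj]⟩, by simp [hi, hj]⟩
  · have hiy : i ≠ y := ne_of_mem_of_not_mem hi hy
    exact ⟨y, i, hi, ⟨⟨hiy, by simp [hy]⟩, by simp [hy]⟩, ⟨hiy.symm, by simp [hy]⟩, by simp [hy]⟩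

theorem exists_realizesGaps (hcard : 3 ≤ ENat.card α) (h : ¬ IsMultiplyPretransitive G α 2) :
    ∃ (R : α → α → Bool) (ε : Bool) (A : Set α),
      (∀ (g : G) (i j : α), R (g • i) (g • j) = R i j) ∧ RealizesGaps R ε A := by
  by_cases hpre : IsPretransitive G α
  · exact exists_realizesGaps_of_isPretransitive h
  · exact exists_realizesGaps_of_not_isPretransitive hcard hpre

end NotTwoTransitive

namespace LegalColoring

open List

variable {V : Type*} {T : SimpleGraph V} {d : ℕ} (C : LegalColoring T d)

/-- The neighbor of `v` along the edge of color `i`. -/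
noncomputable def neighbor (v : V) (i : Fin d) : V :=
  (C.bij v i).choose

theorem adj_neighbor (v : V) (i : Fin d) : T.Adj v (C.neighbor v i) :=
  (C.bij v i).choose_spec.1.1

@[simp]
theorem color_neighbor (v : V) (i : Fin d) : C.color v (C.neighbor v i) = i :=
  (C.bij v i).choose_spec.1.2

theorem neighbor_color {v w : V} (h : T.Adj v w) : C.neighbor v (C.color v w) = w :=
  (C.bij v (C.color v w)).unique ⟨C.adj_neighbor v _, C.color_neighbor v _⟩ ⟨h, rfl⟩

@[simp]
theorem neighbor_neighbor (v : V) (i : Fin d) : C.neighbor (C.neighbor v i) i = v := by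
  have h := C.neighbor_color (C.adj_neighbor v i).symm
  rwa [← C.symm (C.adj_neighbor v i), color_neighbor] at h

theorem color_ne_color_iff {u v w : V} (huv : T.Adj u v) (hvw : T.Adj v w) :
    C.color u v ≠ C.color v w ↔ s(u, v) ≠ s(v, w) := by
  rw [Sym2.eq_swap, ne_eq, ne_eq, Sym2.congr_right, C.symm huv]
  refine not_congr ⟨fun h => ?_, fun h => by rw [h]⟩
  rw [← C.neighbor_color huv.symm, h, C.neighbor_color hvw]

/-- The endpoint of the walk which starts at `v` and whose edges have the colors `l`. -/
noncomputable def follow (v : V) (l : List (Fin d)) : V :=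
  l.foldl C.neighbor v

@[simp]
theorem follow_nil (v : V) : C.follow v [] = v := rfl

@[simp]
theorem follow_cons (v : V) (i : Fin d) (l : List (Fin d)) :
    C.follow v (i :: l) = C.follow (C.neighbor v i) l := rfl

@[simp]
theorem follow_append (v : V) (l₁ l₂ : List (Fin d)) :
    C.follow v (l₁ ++ l₂) = C.follow (C.follow v l₁) l₂ := by
  simp [follow]

theorem follow_follow_reverse (v : V) (l : List (Fin d)) :
    C.follow (C.follow v l) l.reverse = v := by
  induction l generalizing v with
  | nil => rfl
  | cons i l ih => simp [ih]

/-- The colors of the edges of a walk. -/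
def colorWord {v w : V} (p : T.Walk v w) : List (Fin d) :=
  p.darts.map fun e => C.color e.fst e.snd

@[simp]
theorem colorWord_nil (v : V) : C.colorWord (.nil : T.Walk v v) = [] := rfl

@[simp]
theorem colorWord_cons {u v w : V} (h : T.Adj u v) (p : T.Walk v w) :
    C.colorWord (.cons h p) = C.color u v :: C.colorWord p := rfl

theorem colorWord_reverse {v w : V} (p : T.Walk v w) :
    C.colorWord p.reverse = (C.colorWord p).reverse := by
  rw [colorWord, colorWord, SimpleGraph.Walk.darts_reverse, map_reverse, map_map]
  exact congrArg reverse (map_congr_left fun e _ => (C.symm e.adj).symm)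

theorem follow_colorWord {v w : V} (p : T.Walk v w) : C.follow v (C.colorWord p) = w := by
  induction p with
  | nil => rfl
  | cons h p ih => rw [colorWord_cons, follow_cons, C.neighbor_color h, ih]

theorem exists_colorWord_eq (v : V) (l : List (Fin d)) :
    ∃ p : T.Walk v (C.follow v l), C.colorWord p = l := by
  induction l generalizing v with
  | nil => exact ⟨.nil, rfl⟩
  | cons i l ih =>
    obtain ⟨p, hp⟩ := ih (C.neighbor v i)
    exact ⟨.cons (C.adj_neighbor v i) p, by simp [hp]⟩

theorem isChain_colorWord_iff {v w : V} (p : T.Walk v w) :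
    (C.colorWord p).IsChain (· ≠ ·) ↔ p.edges.IsChain (· ≠ ·) := by
  induction p with
  | nil => simp
  | cons huv p ih =>
    rcases p with - | ⟨hvw, p⟩
    · simp
    · simpa only [colorWord_cons, SimpleGraph.Walk.edges_cons, isChain_cons_cons,
        C.color_ne_color_iff huv hvw] using and_congr_right' ih

/-- The colors of the edges of the geodesic from `v` to `w`. -/
noncomputable def geodesicWord (hT : T.IsTree) (v w : V) : List (Fin d) :=
  C.colorWord (hT.existsUnique_path v w).choose

section GeodesicWord

variable (hT : T.IsTree)

theorem colorWord_eq_geodesicWord {v w : V} {p : T.Walk v w} (hp : p.IsPath) :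
    C.colorWord p = C.geodesicWord hT v w :=
  congrArg C.colorWord ((hT.existsUnique_path v w).choose_spec.2 p hp)

theorem exists_isPath_colorWord_eq_geodesicWord (v w : V) :
    ∃ p : T.Walk v w, p.IsPath ∧ C.colorWord p = C.geodesicWord hT v w :=
  ⟨_, (hT.existsUnique_path v w).choose_spec.1, rfl⟩

theorem isChain_geodesicWord (v w : V) : (C.geodesicWord hT v w).IsChain (· ≠ ·) := by
  obtain ⟨p, hp, hword⟩ := C.exists_isPath_colorWord_eq_geodesicWord hT v w
  rwa [← hword, isChain_colorWord_iff, ← hT.isAcyclic.isPath_iff_isChain]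

theorem follow_geodesicWord (v w : V) : C.follow v (C.geodesicWord hT v w) = w :=
  C.follow_colorWord _

theorem geodesicWord_follow (v : V) {l : List (Fin d)} (hl : l.IsChain (· ≠ ·)) :
    C.geodesicWord hT v (C.follow v l) = l := by
  obtain ⟨p, hp⟩ := C.exists_colorWord_eq v l
  have hpath : p.IsPath := by
    rwa [hT.isAcyclic.isPath_iff_isChain, ← C.isChain_colorWord_iff, hp]
  exact (C.colorWord_eq_geodesicWord hT hpath).symm.trans hp

theorem geodesicWord_neighbor (v x : V) (i : Fin d) :
    C.geodesicWord hT v (C.neighbor x i) = C.geodesicWord hT v x ++ [i] ∨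
      C.geodesicWord hT v x = C.geodesicWord hT v (C.neighbor x i) ++ [i] := by
  have hl := C.isChain_geodesicWord hT v x
  have hx := C.follow_geodesicWord hT v x
  generalize C.geodesicWord hT v x = l at hl hx ⊢
  by_cases hli : (l ++ [i]).IsChain (· ≠ ·)
  · left
    simpa [hx] using C.geodesicWord_follow hT v hli
  · right
    obtain ⟨l, rfl⟩ : ∃ l', l = l' ++ [i] := by
      rcases eq_nil_or_concat' l with rfl | ⟨l, j, rfl⟩
      · simp at hli
      · obtain rfl : j = i := by
          by_contra hji
          exact hli (hl.append (isChain_singleton i) (by simpa using hji))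
        exact ⟨l, rfl⟩
    have hl := C.geodesicWord_follow hT v hl.left_of_append
    simp [← hx, hl]

theorem abs_map_geodesicWord_sub_le {f : List (Fin d) → ℝ} {E : ℝ}
    (happend : ∀ l₁ l₂, |f (l₁ ++ l₂) - f l₁ - f l₂| ≤ E)
    (hreverse : ∀ l, f l.reverse = -f l) (x y z : V) :
    |f (C.geodesicWord hT x z) - f (C.geodesicWord hT x y) - f (C.geodesicWord hT y z)| ≤
      3 * E := by
  obtain ⟨a, s, b, hxy, hyz, hab⟩ := exists_cancellation
    (C.isChain_geodesicWord hT x y) (C.isChain_geodesicWord hT y z)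
  have hy : C.follow x (a ++ s) = y := hxy ▸ C.follow_geodesicWord hT x y
  have hz : C.follow y (s.reverse ++ b) = z := hyz ▸ C.follow_geodesicWord hT y z
  have hxz : C.geodesicWord hT x z = a ++ b := by
    rw [← hz, ← hy, ← follow_append, ← C.geodesicWord_follow hT x hab]
    simp [follow_follow_reverse]
  have hab := happend a b
  have has := happend a s
  have hsb := happend s.reverse b
  rw [hreverse] at hsb
  rw [hxy, hyz, hxz]
  rw [abs_le] at hab has hsb ⊢
  constructor <;> linarith

end GeodesicWord


section Translation

variable {C}

theorem apply_neighbor {g : Equiv.Perm V} (hg : g ∈ USet T C ⊥) (v : V) (i : Fin d) :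
    g (C.neighbor v i) = C.neighbor (g v) i := by
  obtain ⟨π, hπ, hcolor⟩ := hg.2 v
  have hadj := C.adj_neighbor v i
  rw [← C.neighbor_color ((hg.1 _ _).2 hadj), hcolor hadj, Subgroup.mem_bot.1 hπ,
    Equiv.Perm.one_apply, color_neighbor]

theorem apply_follow {g : Equiv.Perm V} (hg : g ∈ USet T C ⊥) (v : V) (l : List (Fin d)) :
    g (C.follow v l) = C.follow (g v) l := by
  induction l generalizing v with
  | nil => rfl
  | cons i l ih => rw [follow_cons, ih, apply_neighbor hg, follow_cons]

theorem mem_USet_bot_of_apply_neighbor {g : Equiv.Perm V}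
    (hg : ∀ v i, g (C.neighbor v i) = C.neighbor (g v) i) : g ∈ USet T C ⊥ := by
  refine ⟨fun u v => ⟨fun h => ?_, fun h => ?_⟩, fun v => ⟨1, Subgroup.one_mem _, fun w h => ?_⟩⟩
  · have hv := C.neighbor_color h
    rw [← hg, g.apply_eq_iff_eq] at hv
    exact hv ▸ C.adj_neighbor u _
  · rw [← C.neighbor_color h, hg]
    exact C.adj_neighbor _ _
  · conv_lhs => rw [← C.neighbor_color h, hg, color_neighbor]
    rfl

theorem USet_bot_subset_GFFSet (C : LegalColoring T d) (F F' : Subgroup (Equiv.Perm (Fin d))) :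
    USet T C ⊥ ⊆ GFFSet T C F F' := by
  intro g hg
  have hlocal (H : Subgroup (Equiv.Perm (Fin d))) (v : V) : LocalIn T C H g v := by
    obtain ⟨π, hπ, hcolor⟩ := hg.2 v
    exact ⟨π, bot_le (a := H) hπ, hcolor⟩
  refine ⟨⟨hg.1, ?_⟩, hg.1, hlocal F'⟩
  simp [hlocal F]

theorem mul_self_eq_one (hT : T.IsTree) {g : Equiv.Perm V} (hg : g ∈ USet T C ⊥) {v : V}
    (h : g (g v) = v) : g * g = 1 := by
  ext x
  rw [← C.follow_geodesicWord hT v x, Equiv.Perm.mul_apply, apply_follow hg, apply_follow hg, h,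
    Equiv.Perm.one_apply]

/-- The color-preserving automorphism of a tree which maps `v` to `w`. -/
noncomputable def translation (C : LegalColoring T d) (hT : T.IsTree) (v w : V) :
    Equiv.Perm V where
  toFun x := C.follow w (C.geodesicWord hT v x)
  invFun x := C.follow v (C.geodesicWord hT w x)
  left_inv x := by
    simp only [geodesicWord_follow, isChain_geodesicWord, follow_geodesicWord]
  right_inv x := by
    simp only [geodesicWord_follow, isChain_geodesicWord, follow_geodesicWord]

theorem translation_apply_self (hT : T.IsTree) (v w : V) : C.translation hT v w v = w :=
  congrArg (C.follow w) (C.geodesicWord_follow hT v (l := []) isChain_nil)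

theorem translation_mem_USet_bot (hT : T.IsTree) (v w : V) : C.translation hT v w ∈ USet T C ⊥ := by
  refine mem_USet_bot_of_apply_neighbor fun x i => ?_
  change C.follow w _ = C.neighbor (C.follow w _) i
  rcases C.geodesicWord_neighbor hT v x i with h | h <;> simp [h]

theorem exists_mem_closure_involutions_apply_eq (hT : T.IsTree)
    {Γ : Subgroup (Equiv.Perm V)} (hΓ : USet T C ⊥ ⊆ Γ) (v w : V) :
    ∃ g ∈ Subgroup.closure {s : Γ | s * s = 1}, (g : Equiv.Perm V) v = w := by
  obtain ⟨p⟩ := hT.connected.preconnected v w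
  induction p with
  | nil => exact ⟨1, one_mem _, rfl⟩
  | @cons v u w h _ ih =>
    obtain ⟨g, hg, hgw⟩ := ih
    set s := C.translation hT v u
    have hs : s ∈ USet T C ⊥ := translation_mem_USet_bot hT v u
    have hsv : s v = u := translation_apply_self hT v u
    have hsu : s u = v := by
      rw [← C.neighbor_color h, apply_neighbor hs, hsv, C.symm h, C.neighbor_color h.symm]
    refine ⟨g * ⟨s, hΓ hs⟩, mul_mem hg (Subgroup.subset_closure ?_), ?_⟩
    · exact Subtype.ext (mul_self_eq_one hT hs (hsv.symm ▸ hsu))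
    · simp [hsv, hgw]

end Translation

theorem stepLabels_colorWord_map {β : Type*} {R : Fin d → Fin d → β} {f : T →g T}
    (hf : ∀ ⦃u v w : V⦄, T.Adj v u → T.Adj v w →
      R (C.color (f v) (f u)) (C.color (f v) (f w)) = R (C.color v u) (C.color v w))
    {v w : V} (p : T.Walk v w) :
    stepLabels R (C.colorWord (p.map f)) = stepLabels R (C.colorWord p) := by
  induction p with
  | nil => rfl
  | cons huv p ih =>
    rcases p with - | ⟨hvw, _⟩
    · rfl
    · have hstep := hf huv.symm hvw
      rw [C.symm huv.symm, C.symm (f.map_adj huv.symm)] at hstep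
      simpa [hstep] using ih

theorem signedOccurrences_geodesicWord_apply (hT : T.IsTree) {F : Subgroup (Equiv.Perm (Fin d))}
    {g : Equiv.Perm V} (hg : g ∈ USet T C F) {β : Type*} [DecidableEq β] {R : Fin d → Fin d → β}
    (hR : ∀ π ∈ F, ∀ i j, R (π i) (π j) = R i j) (w : List β) (x y : V) :
    signedOccurrences R w (C.geodesicWord hT (g x) (g y)) =
      signedOccurrences R w (C.geodesicWord hT x y) := by
  let f : T →g T := ⟨g, fun h => (hg.1 _ _).2 h⟩
  have hf ⦃u v w : V⦄ (hvu : T.Adj v u) (hvw : T.Adj v w) :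
      R (C.color (f v) (f u)) (C.color (f v) (f w)) = R (C.color v u) (C.color v w) := by
    obtain ⟨π, hπ, hcolor⟩ := hg.2 v
    exact (congrArg₂ R (hcolor hvu) (hcolor hvw)).trans (hR π hπ _ _)
  obtain ⟨p, hp, hword⟩ := C.exists_isPath_colorWord_eq_geodesicWord hT x y
  have himage : C.colorWord (p.map f) = C.geodesicWord hT (g x) (g y) :=
    C.colorWord_eq_geodesicWord hT (hp.map g.injective)
  rw [← himage, ← hword, signedOccurrences, signedOccurrences, ← colorWord_reverse,
    ← colorWord_reverse, SimpleGraph.Walk.reverse_map, C.stepLabels_colorWord_map hf,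
    C.stepLabels_colorWord_map hf]

end LegalColoring

theorem GFF_homogeneous_quasimorphisms_infinite_general {V : Type*} {d : ℕ} (hd : 3 ≤ d)
    (F : Subgroup (Equiv.Perm (Fin d)))
    (hn2t : ¬∀ i j k l : Fin d, i ≠ j → k ≠ l → ∃ π ∈ F, π i = k ∧ π j = l)
    (T : SimpleGraph V) (hT : T.IsTree) (C : LegalColoring T d)
    (Γ : Subgroup (Equiv.Perm V)) (hbot : USet T C ⊥ ⊆ Γ)
    (hΓ : (Γ : Set (Equiv.Perm V)) ⊆ USet T C F) :
    ∃ φ : ℕ → (Γ → ℝ),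
      (∀ k : ℕ, (∃ D : ℝ, ∀ a b : Γ, |φ k (a * b) - φ k a - φ k b| ≤ D) ∧
        (∀ (g : Γ) (n : ℤ), φ k (g ^ n) = (n : ℝ) * φ k g)) ∧
      (∀ c : ℕ →₀ ℝ,
        (∀ a b : Γ, (c.sum fun k ck => ck * φ k (a * b)) =
          (c.sum fun k ck => ck * φ k a) + c.sum fun k ck => ck * φ k b) → c = 0) := by
  have hcard : 3 ≤ ENat.card (Fin d) := by simpa using hd
  have hF : ¬MulAction.IsMultiplyPretransitive F (Fin d) 2 := by
    rw [MulAction.is_two_pretransitive_iff]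
    intro h
    refine hn2t fun i j k l hij hkl => ?_
    obtain ⟨π, hi, hj⟩ := h hij hkl
    exact ⟨π, π.2, hi, hj⟩
  obtain ⟨R, ε, A, hR, hgaps⟩ := exists_realizesGaps hcard hF
  obtain ⟨v₀⟩ := hT.connected.nonempty
  let f (k : ℕ) (g : Γ) : ℝ := signedOccurrences R (gapWord [k + 3, 2])
    (C.geodesicWord hT v₀ ((g : Equiv.Perm V) v₀))
  have hf (k : ℕ) :
      IsQuasimorphism (f k) (3 * (4 * (gapWord [k + 3, 2]).length + 2)) := fun a b => by
    have h := C.abs_map_geodesicWord_sub_le hT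
      (abs_signedOccurrences_append_sub_le R (gapWord_ne_nil [k + 3, 2]))
      (signedOccurrences_reverse R _) v₀ (a.1 v₀) (a.1 (b.1 v₀))
    rwa [C.signedOccurrences_geodesicWord_apply hT (hΓ a.2) fun π hπ => hR ⟨π, hπ⟩] at h
  refine ⟨fun k => homogenization (f k), fun k => ⟨⟨_, (hf k).isQuasimorphism_homogenization⟩,
    (hf k).homogenization_zpow⟩, eq_zero_of_sum_mul_homogenization_map_mul hf fun k K => ?_⟩
  obtain ⟨u, hu, huk, huj⟩ := hgaps.exists_signedOccurrences_ge k K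
  obtain ⟨g, hg, hgu⟩ :=
    C.exists_mem_closure_involutions_apply_eq hT hbot v₀ (C.follow v₀ u)
  have hfu (j : ℕ) : f j g = signedOccurrences R (gapWord [j + 3, 2]) u := by
    simp only [f, hgu, C.geodesicWord_follow hT v₀ hu]
  exact ⟨g, hg, by rwa [hfu], fun j hj => by rw [hfu, huj j hj]⟩

/-- If `F'` is not 2-transitive, then the space of homogeneous quasimorphisms of
`G(F, F')` modulo real homomorphisms is infinite dimensional: there is a sequence of
homogeneous quasimorphisms no nontrivial finite linear combination of which is a
homomorphism to `ℝ`. -/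
theorem GFF_homogeneous_quasimorphisms_infinite {V : Type*} (d : ℕ) (hd : 3 ≤ d)
    (F F' : Subgroup (Equiv.Perm (Fin d))) (hle : F ≤ F')
    (horb : ∀ π' ∈ F', ∀ i : Fin d, ∃ π ∈ F, π i = π' i)
    (hn2t : ¬∀ i j k l : Fin d, i ≠ j → k ≠ l → ∃ π ∈ F', π i = k ∧ π j = l)
    (T : SimpleGraph V) (hT : T.IsTree) (C : LegalColoring T d)
    (Γ : Subgroup (Equiv.Perm V)) (hΓ : (Γ : Set (Equiv.Perm V)) = GFFSet T C F F') :
    ∃ φ : ℕ → (Γ → ℝ),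
      (∀ k : ℕ, (∃ D : ℝ, ∀ a b : Γ, |φ k (a * b) - φ k a - φ k b| ≤ D) ∧
        (∀ (g : Γ) (n : ℤ), φ k (g ^ n) = (n : ℝ) * φ k g)) ∧
      (∀ c : ℕ →₀ ℝ,
        (∀ a b : Γ, (c.sum fun k ck => ck * φ k (a * b)) =
          (c.sum fun k ck => ck * φ k a) + c.sum fun k ck => ck * φ k b) → c = 0) :=
  GFF_homogeneous_quasimorphisms_infinite_general hd F' hn2t T hT C Γ
    (hΓ ▸ C.USet_bot_subset_GFFSet F F') (hΓ ▸ Set.inter_subset_right)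
end
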